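/- arXiv:1612.09385 — 4 statements merged into one kernel-verified Lean document; each statement's English description precedes it below -/
import Mathlib

section
/- For n ≥ 1, x > 0, and 0 ≤ β < 1, setting y = nx and p = 1/(1-β), the second Jain moment satisfies ∑_{k=0}^∞ (k/n)²·L_{n,k}^{(β)}(x) = (y·p²/n²)·(y + p). -/
noncomputable def jainL (n : ℕ) (β x : ℝ) (k : ℕ) : ℝ :=
  n * x * ((n * x + k * β) ^ (k : ℕ) / (n * x + k * β)) / (Nat.factorial k) *
    Real.exp (-(n * x + k * β))

/-!
For small `u`, expand `exp (-(y + kβ)u)` in `∑ (y + kβ)^k / k! * (u exp (-βu))^k * exp (-yu)` and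
sum the resulting double series along its antidiagonals: the `n`-th one is an `n`-th forward
difference of the polynomial `(y + xβ)^n`, hence equal to `(βu)^n`. This gives
`∑ (y + kβ)^k / k! * (u exp (-βu))^k = exp (yu) / (1 - βu)`. Both sides are analytic in `u` as long
as `0 ≤ u` and `βu < 1`, so the identity persists there, in particular at `u = 1`. Differentiating
it in `u` inserts a factor `k`. In the second moment, one factor `k` cancels against `k!`; after the
shift `k ↦ k + 1`, which replaces `y` by `y + β`, the other is a combination of `k` and `1`.
-/

open Filter Finset Metric Set
open scoped Nat Topology fwdDiff

theorem fwdDiff_iter_add_mul_pow {R : Type*} [CommRing R] (y β : R) (n : ℕ) :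
    (Δ_[1])^[n] (fun x : R ↦ (y + x * β) ^ n) = fun _ ↦ n ! * β ^ n := by
  have expand : (fun x : R ↦ (y + x * β) ^ n) =
      (fun x ↦ ∑ i ∈ range n, (β ^ i * y ^ (n - i) * n.choose i) * x ^ i) +
        β ^ n • fun x ↦ x ^ n := by
    ext x
    simp only [add_comm y, add_pow, sum_range_succ, Pi.add_apply, Pi.smul_apply, smul_eq_mul,
      mul_pow, Nat.sub_self, pow_zero, Nat.choose_self, Nat.cast_one, mul_one]
    congr 1
    · exact sum_congr rfl fun i _ ↦ by ring
    · ring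
  rw [expand, fwdDiff_iter_add, fwdDiff_iter_sum_mul_pow_eq_zero, fwdDiff_iter_const_smul,
    fwdDiff_iter_eq_factorial]
  ext x
  simp [mul_comm]

/-- The general term of the double series obtained from `∑ (y + kβ)^k / k! * u^k * exp (-(y + kβ)u)`
by expanding the exponential; the first index is `k`, the second the exponent of the expansion. -/
noncomputable def abelDoubleTerm {K : Type*} [Field K] (β y u : K) (p : ℕ × ℕ) : K :=
  (y + p.1 * β) ^ p.1 / p.1 ! * u ^ p.1 * ((-((y + p.1 * β) * u)) ^ p.2 / p.2 !)

theorem sum_antidiagonal_abelDoubleTerm {K : Type*} [Field K] [CharZero K] (β y u : K) (n : ℕ) :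
    ∑ p ∈ antidiagonal n, abelDoubleTerm β y u p = (β * u) ^ n := by
  have difference := congrFun (fwdDiff_iter_add_mul_pow y β n) 0
  rw [fwdDiff_iter_eq_sum_shift, ← Nat.sum_antidiagonal_eq_sum_range_succ
    fun i j ↦ ((-1 : ℤ) ^ j * n.choose i) • (y + (0 + i • 1) * β) ^ n] at difference
  have hn : (n ! : K) ≠ 0 := mod_cast n.factorial_ne_zero
  rw [mul_pow, ← mul_right_inj' hn, ← mul_assoc, ← difference, mul_sum, sum_mul]
  refine sum_congr rfl fun p hp ↦ ?_
  obtain rfl := mem_antidiagonal.1 hp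
  have h₁ : (p.1 ! : K) ≠ 0 := mod_cast p.1.factorial_ne_zero
  have h₂ : (p.2 ! : K) ≠ 0 := mod_cast p.2.factorial_ne_zero
  rw [abelDoubleTerm, neg_pow, mul_pow, ← Nat.add_choose_mul_factorial_mul_factorial,
    Nat.choose_symm_add]
  simp only [pow_add, nsmul_eq_mul, zsmul_eq_mul, mul_one, zero_add, Int.cast_mul, Int.cast_pow,
    Int.cast_neg, Int.cast_one, Int.cast_natCast, Nat.cast_mul]
  field_simp

theorem hasSum_abelDoubleTerm (β y u : ℝ) (k : ℕ) :
    HasSum (fun j ↦ abelDoubleTerm β y u (k, j))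
      ((y + k * β) ^ k / k ! * u ^ k * Real.exp (-((y + k * β) * u))) := by
  have h := (NormedSpace.expSeries_div_hasSum_exp (-((y + k * β) * u))).mul_left
    ((y + k * β) ^ k / k ! * u ^ k)
  rwa [← Real.exp_eq_exp_ℝ] at h

theorem hasSum_norm_abelDoubleTerm (β y u : ℝ) (k : ℕ) :
    HasSum (fun j ↦ ‖abelDoubleTerm β y u (k, j)‖)
      (|y + k * β| ^ k / k ! * |u| ^ k * Real.exp (|y + k * β| * |u|)) := by
  have h := (NormedSpace.expSeries_div_hasSum_exp (|y + k * β| * |u|)).mul_left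
    (|y + k * β| ^ k / k ! * |u| ^ k)
  rw [← Real.exp_eq_exp_ℝ] at h
  simpa [abelDoubleTerm] using h

theorem tsum_tsum_eq_tsum_sum_antidiagonal {A E : Type*} [AddCommMonoid A] [HasAntidiagonal A]
    [AddCommGroup E] [UniformSpace E] [IsUniformAddGroup E] [CompleteSpace E] [T2Space E]
    {f : A × A → E} (hf : Summable f) :
    ∑' i, ∑' j, f (i, j) = ∑' n, ∑ p ∈ antidiagonal n, f p := by
  have hσ := HasAntidiagonal.sigmaAntidiagonalEquivProd.summable_iff.2 hf
  rw [← hf.tsum_prod, ← HasAntidiagonal.sigmaAntidiagonalEquivProd.tsum_eq f]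
  refine hσ.tsum_sigma.trans (tsum_congr fun n ↦ ?_)
  rw [← sum_finset_coe, ← tsum_fintype (L := .unconditional _)]
  rfl

theorem hasSum_nsmul_apply_fderiv {𝕜 E F : Type*} [NontriviallyNormedField 𝕜]
    [NormedAddCommGroup E] [NormedSpace 𝕜 E] [NormedAddCommGroup F] [NormedSpace 𝕜 F]
    [CompleteSpace F] (p : FormalMultilinearSeries 𝕜 E F) {x : E} (hx : x ∈ eball 0 p.radius) :
    HasSum (fun k ↦ k • p k fun _ ↦ x) (fderiv 𝕜 p.sum x x) := by
  have hp : HasFPowerSeriesOnBall p.sum p 0 p.radius :=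
    p.hasFPowerSeriesOnBall (pos_of_mem_eball hx)
  have h := (hp.fderiv.hasSum hx).mapL (ContinuousLinearMap.apply 𝕜 F x)
  rw [← hasSum_nat_add_iff' 1]
  simpa [FormalMultilinearSeries.derivSeries_apply_diag] using h

theorem exp_abs_add_mul_le {β s : ℝ} (y : ℝ) (hβ : 0 ≤ β) (hs : 0 ≤ s) (k : ℕ) :
    Real.exp (|y + k * β| * s) ≤ Real.exp (|y| * s) * Real.exp (β * s) ^ k := by
  have triangle : |y + k * β| ≤ |y| + k * β := by
    simpa [abs_of_nonneg hβ] using abs_add_le y (k * β)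
  calc Real.exp (|y + k * β| * s) ≤ Real.exp ((|y| + k * β) * s) := by gcongr
    _ = Real.exp (|y| * s) * Real.exp (β * s) ^ k := by
        rw [← Real.exp_nat_mul, ← Real.exp_add]; ring_nf

theorem mul_exp_neg_lt_mul_exp_neg {β u s : ℝ} (hs : 0 ≤ s) (hus : u < s) (hβs : β * s < 1) :
    u * Real.exp (-(β * u)) < s * Real.exp (-(β * s)) := by
  have tangent : β * (u - s) + 1 ≤ Real.exp (β * (u - s)) := Real.add_one_le_exp _
  have key : u < s * Real.exp (β * (u - s)) := by nlinarith
  calc u * Real.exp (-(β * u)) < s * Real.exp (β * (u - s)) * Real.exp (-(β * u)) := by gcongr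
    _ = s * Real.exp (-(β * s)) := by rw [mul_assoc, ← Real.exp_add]; ring_nf

theorem hasDerivAt_mul_exp_neg (β u : ℝ) :
    HasDerivAt (fun v ↦ v * Real.exp (-(β * v))) ((1 - β * u) * Real.exp (-(β * u))) u := by
  refine ((hasDerivAt_id' u).mul ((hasDerivAt_id' u).const_mul β).fun_neg.exp).congr_deriv ?_
  ring

theorem hasDerivAt_exp_div_one_sub {β u : ℝ} (y : ℝ) (hu : 1 - β * u ≠ 0) :
    HasDerivAt (fun v ↦ Real.exp (y * v) / (1 - β * v))
      (Real.exp (y * u) * (y / (1 - β * u) + β / (1 - β * u) ^ 2)) u := by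
  refine (((hasDerivAt_id' u).const_mul y).exp.div
    (((hasDerivAt_id' u).const_mul β).const_sub 1) hu).congr_deriv ?_
  field_simp
  ring

/-- Abel's power series `∑ (y + kβ)^k / k! * z^k`, which at `z = u exp (-βu)` generates the Jain
weights. -/
noncomputable def abelSeries (β y : ℝ) : FormalMultilinearSeries ℝ ℝ ℝ :=
  .ofScalars ℝ fun k ↦ (y + k * β) ^ k / k !

namespace abelSeries

variable {β u : ℝ} (y : ℝ)

theorem apply_const (β y z : ℝ) (k : ℕ) :
    (abelSeries β y k fun _ ↦ z) = (y + k * β) ^ k / k ! * z ^ k :=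
  FormalMultilinearSeries.ofScalars_apply_eq ..

theorem norm_eq (β y : ℝ) (k : ℕ) : ‖abelSeries β y k‖ = |y + k * β| ^ k / k ! := by
  simp [abelSeries]

theorem norm_mul_pow_le (hβ : 0 ≤ β) {s : ℝ} (hs : 0 ≤ s) (k : ℕ) :
    ‖abelSeries β y k‖ * (s * Real.exp (-(β * s))) ^ k ≤ Real.exp (|y| * s) :=
  calc ‖abelSeries β y k‖ * (s * Real.exp (-(β * s))) ^ k
      = (|y + k * β| * s) ^ k / k ! * Real.exp (-(β * s)) ^ k := by rw [norm_eq]; ring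
    _ ≤ Real.exp (|y + k * β| * s) * Real.exp (-(β * s)) ^ k := by
        gcongr
        exact Real.pow_div_factorial_le_exp _ (by positivity) k
    _ ≤ Real.exp (|y| * s) * Real.exp (β * s) ^ k * Real.exp (-(β * s)) ^ k := by
        gcongr
        exact exp_abs_add_mul_le y hβ hs k
    _ = Real.exp (|y| * s) := by rw [mul_assoc, ← mul_pow, ← Real.exp_add]; simp

theorem ofReal_mul_exp_neg_le_radius (hβ : 0 ≤ β) {s : ℝ} (hs : 0 ≤ s) :
    ENNReal.ofReal (s * Real.exp (-(β * s))) ≤ (abelSeries β y).radius :=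
  (abelSeries β y).le_radius_of_bound (Real.exp (|y| * s)) fun k ↦ by
    rw [Real.coe_toNNReal _ (by positivity)]
    exact norm_mul_pow_le y hβ hs k

theorem radius_pos (hβ : 0 ≤ β) : 0 < (abelSeries β y).radius :=
  (ENNReal.ofReal_pos.2 (by positivity)).trans_le (ofReal_mul_exp_neg_le_radius y hβ zero_le_one)

theorem mul_exp_neg_mem_eball (hβ : 0 ≤ β) (hu : 0 ≤ u) (hβu : β * u < 1) :
    u * Real.exp (-(β * u)) ∈ eball 0 (abelSeries β y).radius := by
  obtain ⟨s, hβs, hus⟩ : ∃ s, β * s < 1 ∧ u < s :=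
    (((by fun_prop : Continuous fun s ↦ β * s).continuousWithinAt.eventually_lt_const hβu).and
      (self_mem_nhdsWithin (s := Ioi u))).exists
  have hs : 0 ≤ s := hu.trans hus.le
  rw [mem_eball_zero_iff, Real.enorm_eq_ofReal (by positivity)]
  refine lt_of_lt_of_le ?_ (ofReal_mul_exp_neg_le_radius y hβ hs)
  exact (ENNReal.ofReal_lt_ofReal_iff_of_nonneg (by positivity)).2
    (mul_exp_neg_lt_mul_exp_neg hs hus hβs)

theorem summable_abelDoubleTerm (hβ : 0 ≤ β)
    (hu : |u| * Real.exp (β * |u|) ∈ eball 0 (abelSeries β y).radius) :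
    Summable (abelDoubleTerm β y u) := by
  refine .of_norm ((summable_prod_of_nonneg fun _ ↦ norm_nonneg _).2
    ⟨fun k ↦ (hasSum_norm_abelDoubleTerm β y u k).summable, ?_⟩)
  refine .of_nonneg_of_le (fun k ↦ tsum_nonneg fun _ ↦ norm_nonneg _) (fun k ↦ ?_)
    (((abelSeries β y).summable_norm_apply hu).mul_left (Real.exp (|y| * |u|)))
  calc ∑' j, ‖abelDoubleTerm β y u (k, j)‖
      = ‖abelSeries β y k‖ * |u| ^ k * Real.exp (|y + k * β| * |u|) := by
        rw [(hasSum_norm_abelDoubleTerm β y u k).tsum_eq, norm_eq]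
    _ ≤ ‖abelSeries β y k‖ * |u| ^ k * (Real.exp (|y| * |u|) * Real.exp (β * |u|) ^ k) := by
        gcongr
        exact exp_abs_add_mul_le y hβ (abs_nonneg u) k
    _ = Real.exp (|y| * |u|) * ‖abelSeries β y k fun _ ↦ |u| * Real.exp (β * |u|)‖ := by
        rw [norm_eq, apply_const, norm_mul, norm_div, norm_pow, norm_pow, Real.norm_natCast,
          Real.norm_eq_abs, Real.norm_of_nonneg (by positivity), mul_pow]
        ring

theorem sum_mul_exp_neg_of_mem_eball (hβ : 0 ≤ β) (hβu : |β * u| < 1)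
    (hu : |u| * Real.exp (β * |u|) ∈ eball 0 (abelSeries β y).radius) :
    (abelSeries β y).sum (u * Real.exp (-(β * u))) = Real.exp (y * u) / (1 - β * u) := by
  have term (k : ℕ) : (abelSeries β y k fun _ ↦ u * Real.exp (-(β * u))) =
      Real.exp (y * u) * ∑' j, abelDoubleTerm β y u (k, j) := by
    have split : Real.exp (-(β * u)) ^ k = Real.exp (y * u) * Real.exp (-((y + k * β) * u)) := by
      rw [← Real.exp_nat_mul, ← Real.exp_add]; ring_nf
    rw [apply_const, (hasSum_abelDoubleTerm β y u k).tsum_eq, mul_pow, split]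
    ring
  calc (abelSeries β y).sum (u * Real.exp (-(β * u)))
      = Real.exp (y * u) * ∑' k, ∑' j, abelDoubleTerm β y u (k, j) := by
        rw [← tsum_mul_left]
        exact tsum_congr term
    _ = Real.exp (y * u) * ∑' n : ℕ, (β * u) ^ n := by
        rw [tsum_tsum_eq_tsum_sum_antidiagonal (summable_abelDoubleTerm y hβ hu)]
        simp only [sum_antidiagonal_abelDoubleTerm]
    _ = Real.exp (y * u) / (1 - β * u) := by
        rw [tsum_geometric_of_abs_lt_one hβu, div_eq_mul_inv]

theorem eventually_sum_mul_exp_neg (hβ : 0 ≤ β) :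
    ∀ᶠ u in 𝓝 0,
      (abelSeries β y).sum (u * Real.exp (-(β * u))) = Real.exp (y * u) / (1 - β * u) := by
  have small : ∀ᶠ u in 𝓝 (0 : ℝ), |β * u| < 1 :=
    (by fun_prop : Continuous fun u ↦ |β * u|).continuousAt.eventually_lt_const (by simp)
  have inside : ∀ᶠ u in 𝓝 (0 : ℝ),
      |u| * Real.exp (β * |u|) ∈ eball 0 (abelSeries β y).radius :=
    (by fun_prop : Continuous fun u : ℝ ↦ |u| * Real.exp (β * |u|)).continuousAt.eventually_mem
      (isOpen_eball.mem_nhds (by simpa using radius_pos y hβ))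
  filter_upwards [small, inside] with u hβu hu using sum_mul_exp_neg_of_mem_eball y hβ hβu hu

theorem sum_mul_exp_neg (hβ : 0 ≤ β) (hu : 0 ≤ u) (hβu : β * u < 1) :
    (abelSeries β y).sum (u * Real.exp (-(β * u))) = Real.exp (y * u) / (1 - β * u) := by
  let U : Set ℝ := {v | 0 ≤ v ∧ β * v < 1}
  have convex_U : Convex ℝ U :=
    (convex_Ici 0).inter (convex_halfSpace_lt (IsLinearMap.isLinearMap_smul β) 1)
  have analytic_left :
      AnalyticOnNhd ℝ (fun v ↦ (abelSeries β y).sum (v * Real.exp (-(β * v)))) U := fun v hv ↦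
    ((abelSeries β y).analyticOnNhd _ (mul_exp_neg_mem_eball y hβ hv.1 hv.2)).fun_comp
      (f := fun v ↦ v * Real.exp (-(β * v))) (by fun_prop)
  have analytic_right : AnalyticOnNhd ℝ (fun v ↦ Real.exp (y * v) / (1 - β * v)) U := fun v hv ↦
    AnalyticAt.div (by fun_prop) (by fun_prop) (sub_pos.2 hv.2).ne'
  exact analytic_left.eqOn_of_preconnected_of_eventuallyEq analytic_right convex_U.isPreconnected
    (z₀ := 0) (by simp [U]) (eventually_sum_mul_exp_neg y hβ) ⟨hu, hβu⟩

theorem hasSum_mul_exp_neg (hβ : 0 ≤ β) (hu : 0 ≤ u) (hβu : β * u < 1) :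
    HasSum (fun k : ℕ ↦ (y + k * β) ^ k / k ! * (u * Real.exp (-(β * u))) ^ k)
      (Real.exp (y * u) / (1 - β * u)) := by
  have h := (abelSeries β y).hasSum (mul_exp_neg_mem_eball y hβ hu hβu)
  simpa only [apply_const, sum_mul_exp_neg y hβ hu hβu] using h

theorem mul_exp_neg_mul_deriv_sum (hβ : 0 ≤ β) (hu : 0 < u) (hβu : β * u < 1) :
    u * Real.exp (-(β * u)) * deriv (abelSeries β y).sum (u * Real.exp (-(β * u))) =
      u * Real.exp (y * u) * (y / (1 - β * u) ^ 2 + β / (1 - β * u) ^ 3) := by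
  set z := u * Real.exp (-(β * u)) with hz
  have hq : 1 - β * u ≠ 0 := (sub_pos.2 hβu).ne'
  have outer : HasDerivAt (abelSeries β y).sum (deriv (abelSeries β y).sum z) z :=
    ((abelSeries β y).analyticOnNhd z
      (mul_exp_neg_mem_eball y hβ hu.le hβu)).differentiableAt.hasDerivAt
  have near : (fun v ↦ (abelSeries β y).sum (v * Real.exp (-(β * v)))) =ᶠ[𝓝 u]
      fun v ↦ Real.exp (y * v) / (1 - β * v) := by
    have hβv : ∀ᶠ v in 𝓝 u, β * v < 1 :=
      (by fun_prop : Continuous fun v ↦ β * v).continuousAt.eventually_lt_const hβu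
    filter_upwards [lt_mem_nhds hu, hβv] with v hv hβv using sum_mul_exp_neg y hβ hv.le hβv
  have deriv_eq : deriv (abelSeries β y).sum z * ((1 - β * u) * Real.exp (-(β * u))) =
      Real.exp (y * u) * (y / (1 - β * u) + β / (1 - β * u) ^ 2) :=
    (outer.comp (h := fun v ↦ v * Real.exp (-(β * v))) u (hasDerivAt_mul_exp_neg β u)).unique
      ((hasDerivAt_exp_div_one_sub y hq).congr_of_eventuallyEq near)
  refine mul_left_cancel₀ hq ?_
  calc (1 - β * u) * (z * deriv (abelSeries β y).sum z)
      = u * (deriv (abelSeries β y).sum z * ((1 - β * u) * Real.exp (-(β * u)))) := by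
        rw [hz]; ring
    _ = u * (Real.exp (y * u) * (y / (1 - β * u) + β / (1 - β * u) ^ 2)) := by rw [deriv_eq]
    _ = (1 - β * u) *
        (u * Real.exp (y * u) * (y / (1 - β * u) ^ 2 + β / (1 - β * u) ^ 3)) := by field_simp

theorem hasSum_natCast_mul_mul_exp_neg (hβ : 0 ≤ β) (hu : 0 < u) (hβu : β * u < 1) :
    HasSum (fun k : ℕ ↦ k * ((y + k * β) ^ k / k ! * (u * Real.exp (-(β * u))) ^ k))
      (u * Real.exp (y * u) * (y / (1 - β * u) ^ 2 + β / (1 - β * u) ^ 3)) := by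
  have euler := hasSum_nsmul_apply_fderiv _ (mul_exp_neg_mem_eball y hβ hu.le hβu)
  simpa only [apply_const, nsmul_eq_mul, fderiv_eq_smul_deriv, smul_eq_mul,
    mul_exp_neg_mul_deriv_sum y hβ hu hβu] using euler

end abelSeries

theorem hasSum_succ_mul_add_mul_pow_mul_exp_neg (y : ℝ) {β : ℝ} (hβ₀ : 0 ≤ β) (hβ₁ : β < 1) :
    HasSum (fun k : ℕ ↦ (k + 1) * ((y + (k + 1) * β) ^ k / k ! * Real.exp (-(y + (k + 1) * β))))
      ((1 / (1 - β)) ^ 2 * (y + 1 / (1 - β))) := by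
  have hq : 1 - β ≠ 0 := (sub_pos.2 hβ₁).ne'
  have zeroth := abelSeries.hasSum_mul_exp_neg (y + β) hβ₀ zero_le_one (by simpa using hβ₁)
  have first := abelSeries.hasSum_natCast_mul_mul_exp_neg (y + β) hβ₀ one_pos (by simpa using hβ₁)
  convert! (first.add zeroth).mul_left (Real.exp (-(y + β))) using 1
  · ext k
    rw [one_mul, mul_one, ← Real.exp_nat_mul]
    rw [show -(y + (k + 1) * β) = -(y + β) + k * -β by ring, Real.exp_add]
    ring
  · rw [Real.exp_neg]
    field_simp
    ring

theorem sq_mul_jainL_succ {n : ℕ} {β x : ℝ} (h : n * x + β ≠ 0) (k : ℕ) :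
    ((k + 1 : ℕ) : ℝ) ^ 2 * jainL n β x (k + 1) =
      n * x * ((k + 1) * ((n * x + (k + 1) * β) ^ k / k ! *
        Real.exp (-(n * x + (k + 1) * β)))) := by
  have cancel : (n * x + (k + 1) * β) ^ (k + 1) / (n * x + (k + 1) * β) =
      (n * x + (k + 1) * β) ^ k := by
    rcases k with _ | k
    · simp [h]
    · rw [pow_succ _ (k + 1)]
      exact mul_div_cancel_of_imp fun hzero ↦ by rw [hzero, zero_pow k.succ_ne_zero]
  rw [jainL, Nat.cast_add_one, cancel, Nat.factorial_succ]
  push_cast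
  field_simp

theorem jain_second_moment_general (n : ℕ) (hn : 1 ≤ n) (x β : ℝ)
    (hxβ : n * x + β ≠ 0) (hβ0 : 0 ≤ β) (hβ1 : β < 1)
    (y p : ℝ) (hy : y = n * x) (hp : p = 1 / (1 - β)) :
    HasSum (fun k : ℕ => (k / n : ℝ) ^ 2 * jainL n β x k)
      (y * p ^ 2 / (n : ℝ) ^ 2 * (y + p)) := by
  subst hy hp
  rw [← hasSum_nat_add_iff' 1]
  convert! (hasSum_succ_mul_add_mul_pow_mul_exp_neg (n * x) hβ0 hβ1).mul_left
    (n * x / n ^ 2) using 1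
  · ext k
    rw [div_pow, div_mul_eq_mul_div, sq_mul_jainL_succ hxβ, mul_div_right_comm]
  · simp only [range_one, sum_singleton, Nat.cast_zero, zero_div, zero_pow two_ne_zero, zero_mul,
      sub_zero]
    ring

theorem jain_second_moment (n : ℕ) (hn : 1 ≤ n) (x β : ℝ)
    (hx : 0 < x) (hβ0 : 0 ≤ β) (hβ1 : β < 1)
    (y p : ℝ) (hy : y = n * x) (hp : p = 1 / (1 - β)) :
    HasSum (fun k : ℕ => (k / n : ℝ) ^ 2 * jainL n β x k)
      (y * p ^ 2 / (n : ℝ) ^ 2 * (y + p)) := by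
  exact jain_second_moment_general n hn x β (by positivity) hβ0 hβ1 y p hy hp
end

section
/- For n ≥ 1, x > 0, and 0 ≤ β < 1, setting y = nx and p = 1/(1-β), the third Jain moment satisfies ∑_{k=0}^∞ (k/n)³·L_{n,k}^{(β)}(x) = (y·p³/n³)·(y² + 3yp + (1 + 2β)p²). -/
/-!
With `a = n x`, the Jain basis functions are the generalized Poisson weights
`W k a = a (a + k β) ^ (k - 1) / k! · exp (-(a + k β))`.

They sum to `1`: since `(W (k + 1))' a = W k (a + β) - W (k + 1) a`, their partial sums are
decreasing in `a` and equal `1` at `a = 0`. Integrating the same relation over `[0, a]` and passing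
to the limit gives `G a ≥ 1 - β + β G (a + β)` for the total mass `G ≤ 1`, so `1 - G a ≤ β ^ m` for
every `m`.

The factorial moment of order `r` is `a S (r, a + r β)` for Jain's series
`S (r, a) = ∑ (a + k β) ^ (k + r - 1) / k! · exp (-(a + k β))`. Splitting off one factor `a + k β`
gives `S (r, a) = a S (r - 1, a) + β S (r, a + β)`. All terms being nonnegative, this unrolls to
`S (r, a) = ∑ β ^ j (a + j β) S (r - 1, a + j β)`. Starting from `a S (0, a) = 1`, each step only
sums a polynomial against a geometric series.
-/

open Filter Finset Topology
open scoped Nat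

section Summation

theorem hasSum_sum_antidiagonal_of_nonneg {g : ℕ → ℕ → ℝ} {σ : ℕ → ℝ} {q : ℝ}
    (hg : ∀ i j, 0 ≤ g i j) (hσ : ∀ j, HasSum (fun i ↦ g i j) (σ j)) (hq : HasSum σ q) :
    HasSum (fun k ↦ ∑ ij ∈ antidiagonal k, g ij.1 ij.2) q := by
  have hsummable : Summable fun ji : ℕ × ℕ ↦ g ji.2 ji.1 := by
    refine (summable_prod_of_nonneg fun ji ↦ hg ji.2 ji.1).2 ⟨fun j ↦ (hσ j).summable, ?_⟩
    simpa only [(hσ _).tsum_eq] using hq.summable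
  have hprod : HasSum (fun ij : ℕ × ℕ ↦ g ij.1 ij.2) q := by
    rw [← (hsummable.hasSum.prod_fiberwise hσ).unique hq]
    exact (Equiv.prodComm ℕ ℕ).hasSum_iff.2 hsummable.hasSum
  exact (HasAntidiagonal.sigmaAntidiagonalEquivProd.hasSum_iff.2 hprod).sigma
    fun k ↦ (antidiagonal k).hasSum fun ij ↦ g ij.1 ij.2

theorem eq_sum_antidiagonal_of_shift_recurrence {R : Type*} [Semiring R] {β : R}
    {f s : ℕ → R → R} (hzero : ∀ a, f 0 a = s 0 a)
    (hsucc : ∀ k a, f (k + 1) a = s (k + 1) a + β * f k (a + β)) (k : ℕ) (a : R) :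
    f k a = ∑ ij ∈ antidiagonal k, β ^ ij.2 * s ij.1 (a + ij.2 * β) := by
  induction k generalizing a with
  | zero => simp [hzero]
  | succ k ih =>
    rw [hsucc, ih, Nat.sum_antidiagonal_succ', mul_sum]
    congr 1
    · simp
    · refine sum_congr rfl fun ij _ ↦ ?_
      rw [pow_succ', mul_assoc, Nat.cast_succ, add_one_mul, add_right_comm, add_assoc a]

theorem hasSum_of_shift_recurrence {β a q : ℝ} (hβ : 0 ≤ β) {f s : ℕ → ℝ → ℝ} {σ : ℕ → ℝ}
    (hzero : ∀ a, f 0 a = s 0 a)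
    (hsucc : ∀ k a, f (k + 1) a = s (k + 1) a + β * f k (a + β))
    (hs : ∀ i j : ℕ, 0 ≤ s i (a + j * β))
    (hσ : ∀ j : ℕ, HasSum (fun i ↦ s i (a + j * β)) (σ j))
    (hq : HasSum (fun j ↦ β ^ j * σ j) q) :
    HasSum (fun k ↦ f k a) q := by
  simp only [eq_sum_antidiagonal_of_shift_recurrence hzero hsucc]
  exact hasSum_sum_antidiagonal_of_nonneg (g := fun i j ↦ β ^ j * s i (a + j * β))
    (fun i j ↦ mul_nonneg (pow_nonneg hβ j) (hs i j)) (fun j ↦ (hσ j).mul_left _) hq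

theorem hasSum_coe_sq_mul_geometric_of_norm_lt_one {𝕜 : Type*} [NormedField 𝕜] {r : 𝕜}
    (hr : ‖r‖ < 1) : HasSum (fun j : ℕ ↦ (j : 𝕜) ^ 2 * r ^ j) (r * (1 + r) / (1 - r) ^ 3) := by
  have hr1 : 1 - r ≠ 0 := sub_ne_zero.2 (by rintro rfl; simp at hr)
  have hchoose (j : ℕ) : 2 * ((j + 2).choose 2 : 𝕜) = (j + 2) * (j + 1) := by
    have hnat : 2 * (j + 2).choose 2 = (j + 2) * (j + 1) := by
      simpa [mul_comm] using (Nat.add_one_mul_choose_eq (j + 1) 1).symm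
    exact_mod_cast congrArg (Nat.cast : ℕ → 𝕜) hnat
  convert! (((hasSum_choose_mul_geometric_of_norm_lt_one 2 hr).mul_left 2).sub
    ((hasSum_coe_mul_geometric_of_norm_lt_one hr).mul_left 3)).sub
    ((hasSum_geometric_of_norm_lt_one hr).mul_left 2) using 1
  · ext j
    linear_combination (-r ^ j) * hchoose j
  · field_simp
    ring

end Summation

/-- The weight at `k` of the generalized Poisson distribution with parameters `a` and `β`, that is
`a (a + k β) ^ (k - 1) / k! · exp (-(a + k β))`. The value at `k = 0` is written separately so that
it is `exp (-a)` even when `a = 0`. -/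
noncomputable def genPoissonWeight (β : ℝ) : ℕ → ℝ → ℝ
  | 0, a => Real.exp (-a)
  | k + 1, a => a * (a + (k + 1) * β) ^ k / (k + 1)! * Real.exp (-(a + (k + 1) * β))

/-- The `k`-th term of Jain's auxiliary series `S (r + 1, a)`; the index is shifted by one from
Jain's, so that the exponent `k + r` is a natural number. -/
noncomputable def jainTerm (β : ℝ) (r k : ℕ) (a : ℝ) : ℝ :=
  (a + k * β) ^ (k + r) / k ! * Real.exp (-(a + k * β))

section Mass

variable {β a : ℝ}

theorem genPoissonWeight_succ (β : ℝ) (k : ℕ) (a : ℝ) :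
    genPoissonWeight β (k + 1) a =
      a * (a + (k + 1) * β) ^ k / (k + 1)! * Real.exp (-(a + (k + 1) * β)) :=
  rfl

theorem genPoissonWeight_nonneg (hβ : 0 ≤ β) (k : ℕ) (ha : 0 ≤ a) :
    0 ≤ genPoissonWeight β k a := by
  cases k <;> simp only [genPoissonWeight] <;> positivity

theorem hasDerivAt_genPoissonWeight_zero (β a : ℝ) :
    HasDerivAt (genPoissonWeight β 0) (-genPoissonWeight β 0 a) a := by
  simpa [genPoissonWeight] using! (hasDerivAt_id a).neg.exp

theorem hasDerivAt_genPoissonWeight_succ (β : ℝ) (k : ℕ) (a : ℝ) :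
    HasDerivAt (genPoissonWeight β (k + 1))
      (genPoissonWeight β k (a + β) - genPoissonWeight β (k + 1) a) a := by
  have hlin : HasDerivAt (fun a : ℝ ↦ a + (k + 1) * β) 1 a := (hasDerivAt_id a).add_const _
  refine ((((hasDerivAt_id a).mul (hlin.pow k)).div_const ((k + 1)! : ℝ)).mul
    hlin.neg.exp).congr_deriv ?_
  cases k with
  | zero =>
    simp only [genPoissonWeight, Nat.cast_zero, zero_add, one_mul, pow_zero, Pi.one_apply, mul_one,
      id_eq, zero_mul, mul_zero, add_zero, Nat.factorial_one, Nat.cast_one, div_one, Pi.neg_apply,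
      Pi.mul_apply]
    ring_nf
  | succ k =>
    have hshift : a + β + (k + 1) * β = a + (k + 1 + 1) * β := by ring
    simp only [genPoissonWeight, hshift, Nat.factorial_succ, id, Pi.pow_apply, Pi.mul_apply,
      Pi.neg_apply]
    push_cast
    field_simp
    ring

theorem hasDerivAt_sum_genPoissonWeight (β : ℝ) (N : ℕ) (a : ℝ) :
    HasDerivAt (fun a ↦ ∑ k ∈ range (N + 1), genPoissonWeight β k a)
      (∑ k ∈ range N, genPoissonWeight β k (a + β) -
        ∑ k ∈ range (N + 1), genPoissonWeight β k a) a := by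
  simp only [sum_range_succ']
  refine ((HasDerivAt.fun_sum fun k _ ↦ hasDerivAt_genPoissonWeight_succ β k a).add
    (hasDerivAt_genPoissonWeight_zero β a)).congr_deriv ?_
  rw [sum_sub_distrib]
  ring

theorem continuous_genPoissonWeight (β : ℝ) (k : ℕ) : Continuous (genPoissonWeight β k) := by
  cases k with
  | zero => exact continuous_iff_continuousAt.2 fun a ↦
      (hasDerivAt_genPoissonWeight_zero β a).continuousAt
  | succ k => exact continuous_iff_continuousAt.2 fun a ↦
      (hasDerivAt_genPoissonWeight_succ β k a).continuousAt

theorem continuous_sum_genPoissonWeight (β : ℝ) (N : ℕ) :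
    Continuous fun a ↦ ∑ k ∈ range N, genPoissonWeight β k a :=
  continuous_finsetSum _ fun k _ ↦ continuous_genPoissonWeight β k

theorem sum_genPoissonWeight_at_zero (β : ℝ) (N : ℕ) :
    ∑ k ∈ range (N + 1), genPoissonWeight β k 0 = 1 := by
  simp [sum_range_succ', genPoissonWeight]

theorem antitoneOn_sum_genPoissonWeight (hβ : 0 ≤ β) (N : ℕ) :
    AntitoneOn (fun a ↦ ∑ k ∈ range N, genPoissonWeight β k a) (Set.Ici 0) := by
  induction N with
  | zero => simpa using antitoneOn_const
  | succ N ih =>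
    have hderiv := hasDerivAt_sum_genPoissonWeight β N
    refine antitoneOn_of_deriv_nonpos (convex_Ici 0)
      (fun a _ ↦ (hderiv a).continuousAt.continuousWithinAt)
      (fun a _ ↦ (hderiv a).differentiableAt.differentiableWithinAt) fun a ha ↦ ?_
    rw [interior_Ici, Set.mem_Ioi] at ha
    rw [(hderiv a).deriv, sum_range_succ]
    have hshift := ih ha.le (add_nonneg ha.le hβ) (le_add_of_nonneg_right hβ)
    linarith [genPoissonWeight_nonneg hβ N ha.le]

theorem sum_genPoissonWeight_le_one (hβ : 0 ≤ β) (N : ℕ) (ha : 0 ≤ a) :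
    ∑ k ∈ range N, genPoissonWeight β k a ≤ 1 :=
  calc ∑ k ∈ range N, genPoissonWeight β k a
      ≤ ∑ k ∈ range (N + 1), genPoissonWeight β k a := by
        rw [sum_range_succ]
        exact le_add_of_nonneg_right (genPoissonWeight_nonneg hβ N ha)
    _ ≤ ∑ k ∈ range (N + 1), genPoissonWeight β k 0 :=
        antitoneOn_sum_genPoissonWeight hβ _ Set.self_mem_Ici ha ha
    _ = 1 := sum_genPoissonWeight_at_zero β N

theorem summable_genPoissonWeight (hβ : 0 ≤ β) (ha : 0 ≤ a) :
    Summable fun k ↦ genPoissonWeight β k a :=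
  summable_of_sum_range_le (fun k ↦ genPoissonWeight_nonneg hβ k ha)
    fun N ↦ sum_genPoissonWeight_le_one hβ N ha

theorem tendsto_integral_genPoissonWeight (hβ : 0 ≤ β) (ha : 0 ≤ a) :
    Tendsto (fun k ↦ ∫ t in (0 : ℝ)..a, genPoissonWeight β k t) atTop (𝓝 0) := by
  have hint (k : ℕ) : IntervalIntegrable (genPoissonWeight β k) MeasureTheory.volume 0 a :=
    (continuous_genPoissonWeight β k).intervalIntegrable _ _
  refine (summable_of_sum_range_le (c := a) (fun k ↦ ?_) fun N ↦ ?_).tendsto_atTop_zero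
  · exact intervalIntegral.integral_nonneg ha fun t ht ↦ genPoissonWeight_nonneg hβ k ht.1
  · rw [← intervalIntegral.integral_finsetSum fun k _ ↦ hint k]
    calc ∫ t in (0 : ℝ)..a, ∑ k ∈ range N, genPoissonWeight β k t
        ≤ ∫ _ in (0 : ℝ)..a, (1 : ℝ) :=
          intervalIntegral.integral_mono_on ha
            ((continuous_sum_genPoissonWeight β N).intervalIntegrable _ _)
            intervalIntegrable_const fun t ht ↦ sum_genPoissonWeight_le_one hβ N ht.1
      _ = a := by simp

theorem sum_genPoissonWeight_eq_integral (β : ℝ) (N : ℕ) (a : ℝ) :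
    ∑ k ∈ range (N + 1), genPoissonWeight β k a =
      1 - (∫ t in (0 : ℝ)..β, ∑ k ∈ range N, genPoissonWeight β k t) +
        (∫ t in a..a + β, ∑ k ∈ range N, genPoissonWeight β k t) -
        ∫ t in (0 : ℝ)..a, genPoissonWeight β N t := by
  let F (M : ℕ) (t : ℝ) : ℝ := ∑ k ∈ range M, genPoissonWeight β k t
  have hint (M : ℕ) (u v : ℝ) : IntervalIntegrable (F M) MeasureTheory.volume u v :=
    (continuous_sum_genPoissonWeight β M).intervalIntegrable u v
  have hint_shift : IntervalIntegrable (fun t ↦ F N (t + β)) MeasureTheory.volume 0 a :=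
    ((continuous_sum_genPoissonWeight β N).comp (continuous_add_const β)).intervalIntegrable _ _
  have hftc : ∫ t in (0 : ℝ)..a, (F N (t + β) - F (N + 1) t) = F (N + 1) a - 1 := by
    rw [← sum_genPoissonWeight_at_zero β N]
    exact intervalIntegral.integral_eq_sub_of_hasDerivAt
      (fun t _ ↦ hasDerivAt_sum_genPoissonWeight β N t) (hint_shift.sub (hint _ _ _))
  have hshift : ∫ t in (0 : ℝ)..a, F N (t + β) = ∫ t in β..a + β, F N t := by
    rw [intervalIntegral.integral_comp_add_right (F N), zero_add]
  have hlast : ∫ t in (0 : ℝ)..a, F (N + 1) t =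
      (∫ t in (0 : ℝ)..a, F N t) + ∫ t in (0 : ℝ)..a, genPoissonWeight β N t := by
    rw [← intervalIntegral.integral_add (hint _ _ _)
      ((continuous_genPoissonWeight β N).intervalIntegrable _ _)]
    simp only [F, sum_range_succ]
  have hswap := intervalIntegral.integral_interval_sub_interval_comm
    (hint N 0 a) (hint N β (a + β)) (hint N 0 β)
  rw [intervalIntegral.integral_sub hint_shift (hint _ _ _), hshift, hlast] at hftc
  linarith

theorem one_sub_add_le_sum_genPoissonWeight (hβ : 0 ≤ β) (N : ℕ) (ha : 0 ≤ a) :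
    1 - β + β * ∑ k ∈ range N, genPoissonWeight β k (a + β) -
        ∫ t in (0 : ℝ)..a, genPoissonWeight β N t ≤
      ∑ k ∈ range (N + 1), genPoissonWeight β k a := by
  let F (t : ℝ) : ℝ := ∑ k ∈ range N, genPoissonWeight β k t
  have hint (u v : ℝ) : IntervalIntegrable F MeasureTheory.volume u v :=
    (continuous_sum_genPoissonWeight β N).intervalIntegrable u v
  have hstart : ∫ t in (0 : ℝ)..β, F t ≤ β := by
    simpa using intervalIntegral.integral_mono_on hβ (hint _ _) intervalIntegrable_const
      fun t ht ↦ sum_genPoissonWeight_le_one hβ N ht.1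
  have hend : β * F (a + β) ≤ ∫ t in a..a + β, F t := by
    simpa using intervalIntegral.integral_mono_on (le_add_of_nonneg_right hβ)
      (intervalIntegrable_const (c := F (a + β))) (hint _ _) fun t ht ↦
        antitoneOn_sum_genPoissonWeight hβ N (ha.trans ht.1) (add_nonneg ha hβ) ht.2
  rw [sum_genPoissonWeight_eq_integral]
  linarith

theorem one_sub_add_le_tsum_genPoissonWeight (hβ : 0 ≤ β) (ha : 0 ≤ a) :
    1 - β + β * ∑' k, genPoissonWeight β k (a + β) ≤ ∑' k, genPoissonWeight β k a := by
  have htendsto {b : ℝ} (hb : 0 ≤ b) := (summable_genPoissonWeight hβ hb).tendsto_sum_tsum_nat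
  refine le_of_tendsto_of_tendsto' ?_ ((tendsto_add_atTop_iff_nat 1).2 (htendsto ha))
    fun N ↦ one_sub_add_le_sum_genPoissonWeight hβ N ha
  simpa using (((htendsto (add_nonneg ha hβ)).const_mul β).const_add (1 - β)).sub
    (tendsto_integral_genPoissonWeight hβ ha)

theorem one_sub_pow_le_tsum_genPoissonWeight (hβ : 0 ≤ β) (m : ℕ) (ha : 0 ≤ a) :
    1 - β ^ m ≤ ∑' k, genPoissonWeight β k a := by
  induction m generalizing a with
  | zero => simpa using tsum_nonneg fun k ↦ genPoissonWeight_nonneg hβ k ha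
  | succ m ih =>
    calc 1 - β ^ (m + 1) = 1 - β + β * (1 - β ^ m) := by ring
      _ ≤ 1 - β + β * ∑' k, genPoissonWeight β k (a + β) := by
        gcongr
        exact ih (add_nonneg ha hβ)
      _ ≤ ∑' k, genPoissonWeight β k a := one_sub_add_le_tsum_genPoissonWeight hβ ha

theorem hasSum_genPoissonWeight (hβ : 0 ≤ β) (hβ1 : β < 1) (ha : 0 ≤ a) :
    HasSum (fun k ↦ genPoissonWeight β k a) 1 := by
  have hpow : Tendsto (fun m : ℕ ↦ 1 - β ^ m) atTop (𝓝 1) := by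
    simpa using (tendsto_pow_atTop_nhds_zero_of_lt_one hβ hβ1).const_sub 1
  have hge := le_of_tendsto' hpow fun m ↦ one_sub_pow_le_tsum_genPoissonWeight hβ m ha
  have hle := Real.tsum_le_of_sum_range_le (fun k ↦ genPoissonWeight_nonneg hβ k ha)
    fun N ↦ sum_genPoissonWeight_le_one hβ N ha
  exact (summable_genPoissonWeight hβ ha).hasSum_iff.2 (hle.antisymm hge)

end Mass

section JainSeries

variable {β a : ℝ}

theorem jainTerm_nonneg (hβ : 0 ≤ β) (r k : ℕ) (ha : 0 ≤ a) : 0 ≤ jainTerm β r k a := by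
  unfold jainTerm
  positivity

theorem jainTerm_zero_succ (β : ℝ) (k : ℕ) (a : ℝ) :
    jainTerm β 0 (k + 1) a = genPoissonWeight β (k + 1) a + β * jainTerm β 0 k (a + β) := by
  have hshift : a + β + k * β = a + (k + 1) * β := by ring
  simp only [jainTerm, genPoissonWeight, hshift, Nat.factorial_succ]
  push_cast
  field_simp
  ring

theorem jainTerm_succ_succ (β : ℝ) (r k : ℕ) (a : ℝ) :
    jainTerm β (r + 1) (k + 1) a =
      a * jainTerm β r (k + 1) a + β * jainTerm β (r + 1) k (a + β) := by
  have hshift : a + β + k * β = a + (k + 1) * β := by ring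
  simp only [jainTerm, hshift, Nat.factorial_succ]
  push_cast
  field_simp
  ring

theorem hasSum_jainTerm_zero (hβ : 0 ≤ β) (hβ1 : β < 1) (ha : 0 ≤ a) :
    HasSum (fun k ↦ jainTerm β 0 k a) (1 - β)⁻¹ := by
  have hpos (j : ℕ) : 0 ≤ a + j * β := by positivity
  refine hasSum_of_shift_recurrence hβ (by simp [jainTerm, genPoissonWeight])
    (jainTerm_zero_succ β) (fun i j ↦ genPoissonWeight_nonneg hβ i (hpos j))
    (fun j ↦ hasSum_genPoissonWeight hβ hβ1 (hpos j)) ?_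
  simpa using hasSum_geometric_of_lt_one hβ hβ1

theorem hasSum_jainTerm_succ (hβ : 0 ≤ β) (ha : 0 ≤ a) {r : ℕ} {S : ℝ → ℝ} {q : ℝ}
    (hS : ∀ b, 0 ≤ b → HasSum (fun k ↦ jainTerm β r k b) (S b))
    (hq : HasSum (fun j : ℕ ↦ β ^ j * ((a + j * β) * S (a + j * β))) q) :
    HasSum (fun k ↦ jainTerm β (r + 1) k a) q := by
  have hpos (j : ℕ) : 0 ≤ a + j * β := by positivity
  exact hasSum_of_shift_recurrence hβ (s := fun k a ↦ a * jainTerm β r k a)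
    (fun a ↦ by simp [jainTerm, pow_succ', mul_assoc]) (jainTerm_succ_succ β r)
    (fun i j ↦ mul_nonneg (hpos j) (jainTerm_nonneg hβ r i (hpos j)))
    (fun j ↦ (hS _ (hpos j)).mul_left _) hq

theorem hasSum_jainTerm_one (hβ : 0 ≤ β) (hβ1 : β < 1) (ha : 0 ≤ a) :
    HasSum (fun k ↦ jainTerm β 1 k a) (a / (1 - β) ^ 2 + β ^ 2 / (1 - β) ^ 3) := by
  have hβ_norm : ‖β‖ < 1 := by rwa [Real.norm_of_nonneg hβ]
  have hβ_ne : 1 - β ≠ 0 := (sub_pos.2 hβ1).ne'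
  refine hasSum_jainTerm_succ hβ ha (fun b hb ↦ hasSum_jainTerm_zero hβ hβ1 hb) ?_
  convert! ((hasSum_geometric_of_norm_lt_one hβ_norm).mul_left (a / (1 - β))).add
    ((hasSum_coe_mul_geometric_of_norm_lt_one hβ_norm).mul_left (β / (1 - β))) using 1
  · ext j
    ring
  · field_simp

theorem hasSum_jainTerm_two (hβ : 0 ≤ β) (hβ1 : β < 1) (ha : 0 ≤ a) :
    HasSum (fun k ↦ jainTerm β 2 k a)
      (a ^ 2 / (1 - β) ^ 3 + 3 * β ^ 2 * a / (1 - β) ^ 4 +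
        β ^ 3 * (1 + 2 * β) / (1 - β) ^ 5) := by
  have hβ_norm : ‖β‖ < 1 := by rwa [Real.norm_of_nonneg hβ]
  have hβ_ne : 1 - β ≠ 0 := (sub_pos.2 hβ1).ne'
  refine hasSum_jainTerm_succ hβ ha (fun b hb ↦ hasSum_jainTerm_one hβ hβ1 hb) ?_
  convert! (((hasSum_geometric_of_norm_lt_one hβ_norm).mul_left
      (a ^ 2 / (1 - β) ^ 2 + a * β ^ 2 / (1 - β) ^ 3)).add
    ((hasSum_coe_mul_geometric_of_norm_lt_one hβ_norm).mul_left
      (2 * a * β / (1 - β) ^ 2 + β ^ 3 / (1 - β) ^ 3))).add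
    ((hasSum_coe_sq_mul_geometric_of_norm_lt_one hβ_norm).mul_left (β ^ 2 / (1 - β) ^ 2)) using 1
  · ext j
    ring
  · field_simp
    ring

end JainSeries

section Moments

variable {β a : ℝ}

theorem descFactorial_mul_genPoissonWeight (β : ℝ) (r k : ℕ) (a : ℝ) :
    ((k + (r + 1)).descFactorial (r + 1) : ℝ) * genPoissonWeight β (k + (r + 1)) a =
      a * jainTerm β r k (a + (r + 1) * β) := by
  have hfact : (k ! : ℝ) * (k + (r + 1)).descFactorial (r + 1) = (k + r + 1)! := by
    exact_mod_cast Nat.add_sub_cancel k (r + 1) ▸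
      Nat.factorial_mul_descFactorial (Nat.le_add_left (r + 1) k)
  have hshift : a + (r + 1) * β + k * β = a + ((k + r : ℕ) + 1) * β := by push_cast; ring
  rw [← add_assoc, genPoissonWeight_succ, jainTerm, hshift, ← hfact]
  have hdesc : ((k + r + 1).descFactorial (r + 1) : ℝ) ≠ 0 := by
    rw [Nat.cast_ne_zero, Ne, Nat.descFactorial_eq_zero_iff_lt]
    lia
  simp only [← add_assoc]
  field_simp

theorem hasSum_descFactorial_mul_genPoissonWeight {r : ℕ} {S : ℝ}
    (hS : HasSum (fun k ↦ jainTerm β r k (a + (r + 1) * β)) S) :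
    HasSum (fun k ↦ (k.descFactorial (r + 1) : ℝ) * genPoissonWeight β k a) (a * S) := by
  refine ((add_left_injective (r + 1)).hasSum_iff fun k hk ↦ ?_).1
    (by simpa only [Function.comp_def, descFactorial_mul_genPoissonWeight] using hS.mul_left a)
  have hlt : k < r + 1 := by
    by_contra! hle
    exact hk ⟨k - (r + 1), Nat.sub_add_cancel hle⟩
  rw [Nat.descFactorial_of_lt hlt, Nat.cast_zero, zero_mul]

theorem cast_pow_three_eq_descFactorial {R : Type*} [CommRing R] (k : ℕ) :
    (k : R) ^ 3 = k.descFactorial 3 + 3 * k.descFactorial 2 + k.descFactorial 1 := by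
  simp only [← descPochhammer_eval_eq_descFactorial]
  simp only [descPochhammer_succ_right, descPochhammer_zero, Nat.cast_zero, sub_zero, one_mul,
    Nat.cast_one, Nat.cast_ofNat, Polynomial.eval_mul, Polynomial.eval_X, Polynomial.eval_sub,
    Polynomial.eval_one, Polynomial.eval_ofNat]
  ring

theorem hasSum_pow_three_mul_genPoissonWeight (hβ : 0 ≤ β) (hβ1 : β < 1) (ha : 0 ≤ a) :
    HasSum (fun k : ℕ ↦ (k : ℝ) ^ 3 * genPoissonWeight β k a)
      (a / (1 - β) ^ 3 * (a ^ 2 + 3 * a / (1 - β) + (1 + 2 * β) / (1 - β) ^ 2)) := by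
  have hβ_ne : 1 - β ≠ 0 := (sub_pos.2 hβ1).ne'
  have hfactorial₁ := hasSum_descFactorial_mul_genPoissonWeight (a := a) (r := 0)
    (hasSum_jainTerm_zero hβ hβ1 (by positivity))
  have hfactorial₂ := hasSum_descFactorial_mul_genPoissonWeight (a := a) (r := 1)
    (hasSum_jainTerm_one hβ hβ1 (by positivity))
  have hfactorial₃ := hasSum_descFactorial_mul_genPoissonWeight (a := a) (r := 2)
    (hasSum_jainTerm_two hβ hβ1 (by positivity))
  convert! (hfactorial₃.add (hfactorial₂.mul_left 3)).add hfactorial₁ using 1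
  · ext k
    rw [cast_pow_three_eq_descFactorial]
    ring
  · push_cast
    field_simp
    ring

end Moments

theorem jainL_eq_genPoissonWeight {n : ℕ} {β x : ℝ} (hnx : 0 < n * x) (hβ : 0 ≤ β) (k : ℕ) :
    jainL n β x k = genPoissonWeight β k (n * x) := by
  cases k with
  | zero =>
    simp only [jainL, genPoissonWeight, Nat.cast_zero, zero_mul, add_zero, pow_zero,
      Nat.factorial_zero, Nat.cast_one, div_one, mul_one_div_cancel hnx.ne', one_mul]
  | succ k =>
    have hbase : n * x + (k + 1) * β ≠ 0 := by positivity
    simp only [jainL, genPoissonWeight, Nat.cast_succ]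
    rw [pow_succ, mul_div_cancel_right₀ _ hbase]

theorem jain_third_moment (n : ℕ) (hn : 1 ≤ n) (x β : ℝ)
    (hx : 0 < x) (hβ0 : 0 ≤ β) (hβ1 : β < 1)
    (y p : ℝ) (hy : y = n * x) (hp : p = 1 / (1 - β)) :
    HasSum (fun k : ℕ => (k / n : ℝ) ^ 3 * jainL n β x k)
      (y * p ^ 3 / (n : ℝ) ^ 3 * (y ^ 2 + 3 * y * p + (1 + 2 * β) * p ^ 2)) := by
  have hnx : 0 < n * x := mul_pos (by exact_mod_cast hn) hx
  have hβ_ne : 1 - β ≠ 0 := (sub_pos.2 hβ1).ne'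
  subst hy hp
  convert! (hasSum_pow_three_mul_genPoissonWeight hβ0 hβ1 hnx.le).div_const ((n : ℝ) ^ 3) using 1
  · ext k
    rw [jainL_eq_genPoissonWeight hnx hβ0]
    ring
  · field_simp
end

section
/- For n ≥ 1, x > 0, and 0 ≤ β < 1, setting y = nx and p = 1/(1-β), the fourth Jain moment satisfies ∑_{k=0}^∞ (k/n)⁴·L_{n,k}^{(β)}(x) = (y·p⁴/n⁴)·(y³ + 6y²p + (7 + 8β)yp² + (1 + 8β + 6β²)p³). -/
/-!
Let `v k a` be the mass that the Poisson distribution of mean `a + k β` gives to `k`. With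
`y = n x`, the Jain weights satisfy `L k = v k y - β v (k - 1) (y + β)` and
`k L k = y v (k - 1) (y + β)`, so the fourth Jain moment is `y / n ^ 4` times the sum of
`(k + 1) ^ 3 * v k (y + β)`.

The partial sums `J N` of the Jain weights satisfy `J (N + 1)' a = J N (a + β) - J (N + 1) a` and
`J N 0 = 1`; integrating this delay equation gives `|1 - J N a| ≤ q ^ N e ^ (c a)` by induction,
where `q = e ^ (c β) / (1 + c)`, and `q < 1` for `c = 1 - β`. Hence the Jain weights sum to one,
that is, `V 0 a - β V 0 (a + β) = 1` for the moments `V j a = ∑ k ^ j * v k a`.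
Since `(k + 1) v (k + 1) a = (a + (k + 1) β) v k (a + β)`, every other difference
`V j a - β V j (a + β)` is a combination of lower moments at `a + β`. Such an equation has at most
one solution that grows no faster than `e ^ (c a)`, so each `V j` is the polynomial that solves it.
-/

open Asymptotics Filter Finset Polynomial Topology
open scoped Nat

/-- The mass at `k` of the Poisson distribution of mean `a + k β`. Unlike the Jain weights
`a (a + k β) ^ (k - 1) / k! * e ^ (-(a + k β))`, it needs no convention at `k = 0`. -/
noncomputable def driftPoisson (β : ℝ) (k : ℕ) (a : ℝ) : ℝ :=
  (a + k * β) ^ k / k ! * Real.exp (-(a + k * β))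

/-- The sum over `k ≤ N` of the Jain weights `a (a + k β) ^ (k - 1) / k! * e ^ (-(a + k β))`. It is
expressed through `driftPoisson`, by means of
`a (a + k β) ^ (k - 1) = (a + k β) ^ k - k β (a + k β) ^ (k - 1)`, so that `a = 0` is not
exceptional. -/
noncomputable def jainPartialSum (β : ℝ) (N : ℕ) (a : ℝ) : ℝ :=
  ∑ k ∈ range (N + 1), driftPoisson β k a - β * ∑ k ∈ range N, driftPoisson β k (a + β)

/-- The ratio of the geometric sequences that bound both the weights `driftPoisson` and the
remainders `1 - jainPartialSum`, against the growth `e ^ (c a)` in `a`. -/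
noncomputable def driftRatio (β c : ℝ) : ℝ :=
  Real.exp (c * β) / (1 + c)

/-- The `j`-th moment of the weights `driftPoisson β · a`, whose total mass is `1 / (1 - β)`. -/
noncomputable def driftMoment (β : ℝ) (j : ℕ) (a : ℝ) : ℝ :=
  ∑' k : ℕ, (k : ℝ) ^ j * driftPoisson β k a

variable {β a c p : ℝ}

lemma driftPoisson_nonneg (hβ : 0 ≤ β) (ha : 0 ≤ a) (k : ℕ) : 0 ≤ driftPoisson β k a := by
  unfold driftPoisson; positivity

lemma driftPoisson_le (hβ : 0 ≤ β) (hc : -1 < c) (ha : 0 ≤ a) (k : ℕ) :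
    driftPoisson β k a ≤ Real.exp (c * a) * driftRatio β c ^ k := by
  have hc' : 0 < 1 + c := by linarith
  set l := a + k * β with hl
  have hpow : l ^ k / k ! ≤ Real.exp ((1 + c) * l) / (1 + c) ^ k := by
    rw [le_div_iff₀ (by positivity), div_mul_eq_mul_div, mul_comm (l ^ k), ← mul_pow]
    exact Real.pow_div_factorial_le_exp _ (by positivity) k
  calc driftPoisson β k a ≤ Real.exp ((1 + c) * l) / (1 + c) ^ k * Real.exp (-l) := by
        unfold driftPoisson; gcongr
    _ = Real.exp (c * a) * driftRatio β c ^ k := by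
        rw [driftRatio, div_pow, ← Real.exp_nat_mul, div_mul_eq_mul_div, mul_div_assoc',
          ← Real.exp_add, ← Real.exp_add, hl]
        ring_nf

lemma succ_mul_driftPoisson_succ (β a : ℝ) (k : ℕ) :
    (k + 1) * driftPoisson β (k + 1) a = (a + (k + 1) * β) * driftPoisson β k (a + β) := by
  have hmean : a + β + k * β = a + (k + 1) * β := by ring
  rw [driftPoisson, driftPoisson, Nat.factorial_succ, hmean]
  push_cast
  rw [pow_succ]
  field_simp

lemma hasDerivAt_driftPoisson_zero (β a : ℝ) :
    HasDerivAt (driftPoisson β 0) (-driftPoisson β 0 a) a := by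
  have hexp : driftPoisson β 0 = fun a ↦ Real.exp (-a) := by
    ext a
    simp [driftPoisson]
  simpa [hexp] using (hasDerivAt_neg a).exp

lemma hasDerivAt_driftPoisson_succ (β a : ℝ) (k : ℕ) :
    HasDerivAt (driftPoisson β (k + 1))
      (driftPoisson β k (a + β) - driftPoisson β (k + 1) a) a := by
  have hmean : HasDerivAt (fun a : ℝ ↦ a + (k + 1 : ℕ) * β) 1 a := (hasDerivAt_id a).add_const _
  refine (((hmean.pow (k + 1)).div_const ((k + 1)! : ℝ)).mul hmean.neg.exp).congr_deriv ?_
  have hmean' : a + β + k * β = a + (k + 1) * β := by ring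
  simp only [driftPoisson, Nat.factorial_succ, Pi.pow_apply, Pi.neg_apply, add_tsub_cancel_right]
  push_cast
  rw [hmean']
  field_simp
  ring

lemma hasDerivAt_sum_driftPoisson (β a : ℝ) (N : ℕ) :
    HasDerivAt (fun a ↦ ∑ k ∈ range (N + 1), driftPoisson β k a)
      (∑ k ∈ range N, driftPoisson β k (a + β) - ∑ k ∈ range (N + 1), driftPoisson β k a) a := by
  simp only [sum_range_succ']
  refine ((HasDerivAt.fun_sum fun k _ ↦ hasDerivAt_driftPoisson_succ β a k).add
    (hasDerivAt_driftPoisson_zero β a)).congr_deriv ?_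
  rw [sum_sub_distrib]
  ring

lemma hasDerivAt_jainPartialSum_succ (β a : ℝ) (N : ℕ) :
    HasDerivAt (jainPartialSum β (N + 1))
      (jainPartialSum β N (a + β) - jainPartialSum β (N + 1) a) a := by
  have hshift := (hasDerivAt_sum_driftPoisson β (a + β) N).comp_add_const a β
  refine ((hasDerivAt_sum_driftPoisson β a (N + 1)).sub (hshift.const_mul β)).congr_deriv ?_
  unfold jainPartialSum
  ring

lemma jainPartialSum_zero_left (β a : ℝ) : jainPartialSum β 0 a = Real.exp (-a) := by
  simp [jainPartialSum, driftPoisson]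

lemma jainPartialSum_apply_zero (β : ℝ) (N : ℕ) : jainPartialSum β N 0 = 1 := by
  have hterm (k : ℕ) : driftPoisson β (k + 1) 0 = β * driftPoisson β k (0 + β) := by
    have := succ_mul_driftPoisson_succ β 0 k
    have hk : (k + 1 : ℝ) ≠ 0 := by positivity
    exact mul_left_cancel₀ hk (by linear_combination this)
  rw [jainPartialSum, sum_range_succ', mul_sum, sum_congr rfl fun k _ ↦ hterm k]
  simp [driftPoisson]

lemma abs_le_of_hasDerivAt_sub_self {f g : ℝ → ℝ} {K : ℝ} (hc : -1 < c)
    (hf : ∀ s, 0 ≤ s → HasDerivAt f (g s - f s) s) (hf₀ : f 0 = 0)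
    (hg : ∀ s, 0 ≤ s → |g s| ≤ K * Real.exp (c * s)) (ha : 0 ≤ a) :
    |f a| ≤ K / (1 + c) * Real.exp (c * a) := by
  have hc' : 0 < 1 + c := by linarith
  have hK : 0 ≤ K := by simpa using (abs_nonneg _).trans (hg 0 le_rfl)
  have hF (s : ℝ) (hs : 0 ≤ s) :
      HasDerivAt (fun s ↦ Real.exp s * f s) (Real.exp s * g s) s :=
    ((Real.hasDerivAt_exp s).mul (hf s hs)).congr_deriv (by ring)
  have hB (s : ℝ) : HasDerivAt (fun s ↦ K / (1 + c) * Real.exp ((1 + c) * s))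
      (K * Real.exp ((1 + c) * s)) s := by
    refine ((((hasDerivAt_id s).const_mul (1 + c)).exp).const_mul (K / (1 + c))).congr_deriv ?_
    simp only [id]
    field_simp
  have hbound (s : ℝ) (hs : 0 ≤ s) : ‖Real.exp s * g s‖ ≤ K * Real.exp ((1 + c) * s) := by
    rw [Real.norm_eq_abs, abs_mul, Real.abs_exp, add_mul, one_mul, Real.exp_add, mul_left_comm]
    gcongr
    exact hg s hs
  have hinit : ‖Real.exp 0 * f 0‖ ≤ K / (1 + c) * Real.exp ((1 + c) * 0) := by
    simpa [hf₀] using div_nonneg hK hc'.le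
  have hle := image_norm_le_of_norm_deriv_right_le_deriv_boundary
    (fun s hs ↦ (hF s hs.1).continuousAt.continuousWithinAt)
    (fun s hs ↦ (hF s hs.1).hasDerivWithinAt) hinit hB
    (fun s hs ↦ hbound s hs.1) (Set.right_mem_Icc.2 ha)
  rw [Real.norm_eq_abs, abs_mul, Real.abs_exp, add_mul, one_mul, Real.exp_add, mul_left_comm] at hle
  exact le_of_mul_le_mul_left hle (Real.exp_pos a)

lemma abs_one_sub_jainPartialSum_le (hβ : 0 ≤ β) (hc : 0 ≤ c) (N : ℕ) (ha : 0 ≤ a) :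
    |1 - jainPartialSum β N a| ≤ driftRatio β c ^ N * Real.exp (c * a) := by
  induction N generalizing a with
  | zero =>
    have hexp : Real.exp (-a) ≤ 1 := Real.exp_le_one_iff.2 (by linarith)
    have hone : 1 ≤ Real.exp (c * a) := Real.one_le_exp (by positivity)
    rw [jainPartialSum_zero_left, pow_zero, one_mul, abs_of_nonneg (by linarith)]
    linarith [Real.exp_pos (-a)]
  | succ N ih =>
    have hderiv (s : ℝ) : HasDerivAt (fun s ↦ 1 - jainPartialSum β (N + 1) s)
        ((1 - jainPartialSum β N (s + β)) - (1 - jainPartialSum β (N + 1) s)) s :=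
      ((hasDerivAt_jainPartialSum_succ β s N).const_sub 1).congr_deriv (by ring)
    have hdelay (s : ℝ) (hs : 0 ≤ s) :
        |1 - jainPartialSum β N (s + β)| ≤
          driftRatio β c ^ N * Real.exp (c * β) * Real.exp (c * s) := by
      rw [mul_assoc, ← Real.exp_add, ← mul_add, add_comm β]
      exact ih (by positivity)
    have hle := abs_le_of_hasDerivAt_sub_self (by linarith) (fun s _ ↦ hderiv s)
      (by simp [jainPartialSum_apply_zero]) hdelay ha
    rwa [mul_div_assoc, ← driftRatio, ← pow_succ] at hle

lemma exp_one_sub_mul_self_lt (hβ : 0 ≤ β) (hβ1 : β < 1) :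
    Real.exp ((1 - β) * β) < 2 - β := by
  have hpos : 0 < 1 - (1 - β) * β := by nlinarith
  calc Real.exp ((1 - β) * β) ≤ 1 / (1 - (1 - β) * β) :=
        Real.exp_bound_div_one_sub_of_interval (mul_nonneg (by linarith) hβ) (by linarith)
    _ < 2 - β := by
        rw [div_lt_iff₀ hpos]
        have hcube : 0 < (1 - β) ^ 3 := pow_pos (by linarith) 3
        linear_combination hcube

lemma driftRatio_nonneg (β : ℝ) (hc : -1 < c) : 0 ≤ driftRatio β c :=
  div_nonneg (Real.exp_nonneg _) (by linarith)

lemma driftRatio_one_sub_lt_one (hβ : 0 ≤ β) (hβ1 : β < 1) : driftRatio β (1 - β) < 1 := by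
  rw [driftRatio, div_lt_one (by linarith)]
  linarith [exp_one_sub_mul_self_lt hβ hβ1]

lemma mul_exp_one_sub_mul_self_lt_one (hβ : 0 ≤ β) (hβ1 : β < 1) :
    β * Real.exp ((1 - β) * β) < 1 := by
  have hsq : 0 < (1 - β) ^ 2 := pow_pos (by linarith) 2
  nlinarith [exp_one_sub_mul_self_lt hβ hβ1]

lemma summable_pow_mul_driftRatio (hc : -1 < c) (hq : driftRatio β c < 1) (j : ℕ) :
    Summable fun k : ℕ ↦ (k : ℝ) ^ j * driftRatio β c ^ k := by
  apply summable_pow_mul_geometric_of_norm_lt_one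
  rwa [Real.norm_of_nonneg (driftRatio_nonneg β hc)]

lemma pow_mul_driftPoisson_le (hβ : 0 ≤ β) (hc : -1 < c) (ha : 0 ≤ a) (j k : ℕ) :
    (k : ℝ) ^ j * driftPoisson β k a ≤
      Real.exp (c * a) * ((k : ℝ) ^ j * driftRatio β c ^ k) := by
  rw [mul_left_comm]
  gcongr
  exact driftPoisson_le hβ hc ha k

lemma pow_mul_driftPoisson_nonneg (hβ : 0 ≤ β) (ha : 0 ≤ a) (j k : ℕ) :
    0 ≤ (k : ℝ) ^ j * driftPoisson β k a :=
  mul_nonneg (by positivity) (driftPoisson_nonneg hβ ha k)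

lemma hasSum_driftMoment (hβ : 0 ≤ β) (hβ1 : β < 1) (ha : 0 ≤ a) (j : ℕ) :
    HasSum (fun k : ℕ ↦ (k : ℝ) ^ j * driftPoisson β k a) (driftMoment β j a) := by
  have hc : -1 < 1 - β := by linarith
  have hgeom := summable_pow_mul_driftRatio hc (driftRatio_one_sub_lt_one hβ hβ1) j
  exact (Summable.of_nonneg_of_le (pow_mul_driftPoisson_nonneg hβ ha j)
    (pow_mul_driftPoisson_le hβ hc ha j) (hgeom.mul_left _)).hasSum

lemma driftMoment_isBigO_exp (hβ : 0 ≤ β) (hβ1 : β < 1) (j : ℕ) :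
    driftMoment β j =O[atTop] fun a ↦ Real.exp ((1 - β) * a) := by
  have hc : -1 < 1 - β := by linarith
  have hgeom := summable_pow_mul_driftRatio hc (driftRatio_one_sub_lt_one hβ hβ1) j
  refine .of_bound (∑' k : ℕ, (k : ℝ) ^ j * driftRatio β (1 - β) ^ k) ?_
  filter_upwards [eventually_ge_atTop 0] with a ha
  have hnonneg : 0 ≤ driftMoment β j a := tsum_nonneg (pow_mul_driftPoisson_nonneg hβ ha j)
  rw [Real.norm_of_nonneg hnonneg, Real.norm_eq_abs, Real.abs_exp, mul_comm, ← tsum_mul_left]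
  exact (hasSum_driftMoment hβ hβ1 ha j).summable.tsum_le_tsum
    (pow_mul_driftPoisson_le hβ hc ha j) (hgeom.mul_left _)

lemma tendsto_jainPartialSum (hβ : 0 ≤ β) (hβ1 : β < 1) (ha : 0 ≤ a) :
    Tendsto (fun N ↦ jainPartialSum β N a) atTop (𝓝 1) := by
  have hgeom := (tendsto_pow_atTop_nhds_zero_of_lt_one (driftRatio_nonneg β (by linarith))
    (driftRatio_one_sub_lt_one hβ hβ1)).mul_const (Real.exp ((1 - β) * a))
  rw [zero_mul] at hgeom
  have hzero : Tendsto (fun N ↦ 1 - jainPartialSum β N a) atTop (𝓝 0) :=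
    squeeze_zero_norm (fun N ↦ abs_one_sub_jainPartialSum_le hβ (by linarith) N ha) hgeom
  simpa using hzero.const_sub 1

lemma driftMoment_zero_sub (hβ : 0 ≤ β) (hβ1 : β < 1) (ha : 0 ≤ a) :
    driftMoment β 0 a - β * driftMoment β 0 (a + β) = 1 := by
  have hsum {b : ℝ} (hb : 0 ≤ b) :
      Tendsto (fun N ↦ ∑ k ∈ range N, driftPoisson β k b) atTop (𝓝 (driftMoment β 0 b)) := by
    simpa using (hasSum_driftMoment hβ hβ1 hb 0).tendsto_sum_nat
  have hlim := ((hsum ha).comp (tendsto_add_atTop_nat 1)).sub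
    ((hsum (add_nonneg ha hβ)).const_mul β)
  exact tendsto_nhds_unique hlim (tendsto_jainPartialSum hβ hβ1 ha)

lemma hasSum_succ_pow_mul_driftPoisson (hβ : 0 ≤ β) (hβ1 : β < 1) (ha : 0 ≤ a) (j : ℕ) :
    HasSum (fun k : ℕ ↦ ((k : ℝ) + 1) ^ j * driftPoisson β k a)
      (∑ i ∈ range (j + 1), j.choose i * driftMoment β i a) := by
  have hbinom := hasSum_sum fun i (_ : i ∈ range (j + 1)) ↦
    (hasSum_driftMoment hβ hβ1 ha i).mul_left (j.choose i : ℝ)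
  refine hbinom.congr_fun fun k ↦ ?_
  rw [add_pow, sum_mul]
  exact sum_congr rfl fun i _ ↦ by ring

lemma driftMoment_succ (hβ : 0 ≤ β) (hβ1 : β < 1) (ha : 0 ≤ a) (j : ℕ) :
    driftMoment β (j + 1) a =
      a * ∑ i ∈ range (j + 1), j.choose i * driftMoment β i (a + β) +
        β * ∑ i ∈ range (j + 2), (j + 1).choose i * driftMoment β i (a + β) := by
  have haβ : 0 ≤ a + β := add_nonneg ha hβ
  have hterm (k : ℕ) : ((k + 1 : ℕ) : ℝ) ^ (j + 1) * driftPoisson β (k + 1) a =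
      a * (((k : ℝ) + 1) ^ j * driftPoisson β k (a + β)) +
        β * (((k : ℝ) + 1) ^ (j + 1) * driftPoisson β k (a + β)) := by
    push_cast
    linear_combination ((k : ℝ) + 1) ^ j * succ_mul_driftPoisson_succ β a k
  have hsum := ((hasSum_succ_pow_mul_driftPoisson hβ hβ1 haβ j).mul_left a).add
    ((hasSum_succ_pow_mul_driftPoisson hβ hβ1 haβ (j + 1)).mul_left β)
  have hshift := (hasSum_nat_add_iff' 1).2 (hasSum_driftMoment hβ hβ1 ha (j + 1))
  simp only [range_one, sum_singleton, Nat.cast_zero, zero_pow j.succ_ne_zero, zero_mul,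
    sub_zero] at hshift
  exact hshift.unique (hsum.congr_fun hterm)

lemma polynomial_eval_isBigO_exp (P : ℝ[X]) (hc : 0 < c) :
    (fun a ↦ P.eval a) =O[atTop] fun a ↦ Real.exp (c * a) := by
  have hpow : (fun a ↦ P.eval a) =O[atTop] fun a ↦ (X ^ P.natDegree : ℝ[X]).eval a :=
    P.isBigO_atTop_of_degree_le _ (by simp [P.degree_le_natDegree])
  simp only [eval_pow, eval_X] at hpow
  exact hpow.trans (isLittleO_pow_exp_pos_mul_atTop P.natDegree hc).isBigO

lemma eq_zero_of_eq_mul_shift {f : ℝ → ℝ} (hβ : 0 ≤ β) (hc : β * Real.exp (c * β) < 1)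
    (hO : f =O[atTop] fun a ↦ Real.exp (c * a)) (hf : ∀ a, 0 ≤ a → f a = β * f (a + β))
    (ha : 0 ≤ a) : f a = 0 := by
  obtain rfl | hβ_pos := hβ.eq_or_lt
  · simpa using hf a ha
  have hiter (N : ℕ) : f a = β ^ N * f (a + N * β) := by
    induction N with
    | zero => simp
    | succ N ih =>
      rw [ih, hf _ (by positivity), pow_succ]
      push_cast
      ring_nf
  have hshift : Tendsto (fun N : ℕ ↦ a + N * β) atTop atTop :=
    tendsto_atTop_add_const_left _ _ (tendsto_natCast_atTop_atTop.atTop_mul_const hβ_pos)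
  have hgeom : Tendsto (fun N : ℕ ↦ β ^ N * Real.exp (c * (a + N * β))) atTop (𝓝 0) := by
    have := (tendsto_pow_atTop_nhds_zero_of_lt_one (by positivity) hc).const_mul (Real.exp (c * a))
    rw [mul_zero] at this
    refine this.congr fun N ↦ ?_
    rw [mul_pow, ← Real.exp_nat_mul, mul_add, Real.exp_add]
    ring_nf
  have hzero := ((isBigO_refl (fun N : ℕ ↦ β ^ N) atTop).mul
    (hO.comp_tendsto hshift)).trans_tendsto hgeom
  exact tendsto_nhds_unique (tendsto_const_nhds.congr hiter) hzero

lemma driftMoment_eq_eval (hβ : 0 ≤ β) (hβ1 : β < 1) {j : ℕ} (P : ℝ[X])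
    (hP : ∀ a, 0 ≤ a → driftMoment β j a - β * driftMoment β j (a + β) =
      P.eval a - β * P.eval (a + β)) (ha : 0 ≤ a) :
    driftMoment β j a = P.eval a := by
  have hO := (driftMoment_isBigO_exp hβ hβ1 j).sub
    (polynomial_eval_isBigO_exp P (c := 1 - β) (by linarith))
  refine sub_eq_zero.1 (eq_zero_of_eq_mul_shift (f := fun a ↦ driftMoment β j a - P.eval a) hβ
    (mul_exp_one_sub_mul_self_lt_one hβ hβ1) hO (fun a ha ↦ ?_) ha)
  linear_combination hP a ha

lemma driftMoment_zero (hβ : 0 ≤ β) (hβ1 : β < 1) (hp : p * (1 - β) = 1) (ha : 0 ≤ a) :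
    driftMoment β 0 a = p := by
  rw [driftMoment_eq_eval hβ hβ1 (C p) (fun a ha ↦ ?_) ha, eval_C]
  rw [driftMoment_zero_sub hβ hβ1 ha, eval_C, eval_C]
  linear_combination -hp

lemma driftMoment_one (hβ : 0 ≤ β) (hβ1 : β < 1) (hp : p * (1 - β) = 1) (ha : 0 ≤ a) :
    driftMoment β 1 a = p ^ 2 * a + β * p ^ 3 := by
  rw [driftMoment_eq_eval hβ hβ1 (C (p ^ 2) * X + C (β * p ^ 3)) (fun a ha ↦ ?_) ha]
  · simp
  have haβ : 0 ≤ a + β := add_nonneg ha hβ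
  simp only [driftMoment_succ hβ hβ1 ha, sum_range_succ, sum_range_zero, Nat.choose, eval_add,
    eval_mul, eval_C, eval_X, driftMoment_zero hβ hβ1 hp haβ]
  grind

lemma driftMoment_two (hβ : 0 ≤ β) (hβ1 : β < 1) (hp : p * (1 - β) = 1) (ha : 0 ≤ a) :
    driftMoment β 2 a =
      p ^ 3 * a ^ 2 + (1 + 2 * β) * p ^ 4 * a + β * (1 + 2 * β) * p ^ 5 := by
  rw [driftMoment_eq_eval hβ hβ1 (C (p ^ 3) * X ^ 2 + C ((1 + 2 * β) * p ^ 4) * X +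
    C (β * (1 + 2 * β) * p ^ 5)) (fun a ha ↦ ?_) ha]
  · simp
  have haβ : 0 ≤ a + β := add_nonneg ha hβ
  simp only [driftMoment_succ hβ hβ1 ha, sum_range_succ, sum_range_zero, Nat.choose, eval_add,
    eval_mul, eval_pow, eval_C, eval_X, driftMoment_zero hβ hβ1 hp haβ,
    driftMoment_one hβ hβ1 hp haβ]
  grind

lemma driftMoment_three (hβ : 0 ≤ β) (hβ1 : β < 1) (hp : p * (1 - β) = 1) (ha : 0 ≤ a) :
    driftMoment β 3 a =
      p ^ 4 * a ^ 3 + 3 * (1 + β) * p ^ 5 * a ^ 2 + (1 + 8 * β + 6 * β ^ 2) * p ^ 6 * a +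
        β * (1 + 8 * β + 6 * β ^ 2) * p ^ 7 := by
  rw [driftMoment_eq_eval hβ hβ1 (C (p ^ 4) * X ^ 3 + C (3 * (1 + β) * p ^ 5) * X ^ 2 +
    C ((1 + 8 * β + 6 * β ^ 2) * p ^ 6) * X + C (β * (1 + 8 * β + 6 * β ^ 2) * p ^ 7))
    (fun a ha ↦ ?_) ha]
  · simp
  have haβ : 0 ≤ a + β := add_nonneg ha hβ
  simp only [driftMoment_succ hβ hβ1 ha, sum_range_succ, sum_range_zero, Nat.choose, eval_add,
    eval_mul, eval_pow, eval_C, eval_X, driftMoment_zero hβ hβ1 hp haβ,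
    driftMoment_one hβ hβ1 hp haβ, driftMoment_two hβ hβ1 hp haβ]
  grind

lemma hasSum_succ_cube_mul_driftPoisson (hβ : 0 ≤ β) (hβ1 : β < 1) (hp : p * (1 - β) = 1)
    (ha : 0 ≤ a) :
    HasSum (fun k : ℕ ↦ ((k : ℝ) + 1) ^ 3 * driftPoisson β k (a + β))
      (p ^ 4 * (a ^ 3 + 6 * a ^ 2 * p + (7 + 8 * β) * a * p ^ 2 +
        (1 + 8 * β + 6 * β ^ 2) * p ^ 3)) := by
  have haβ : 0 ≤ a + β := add_nonneg ha hβ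
  have hvalue : ∑ i ∈ range 4, Nat.choose 3 i * driftMoment β i (a + β) =
      p ^ 4 * (a ^ 3 + 6 * a ^ 2 * p + (7 + 8 * β) * a * p ^ 2 +
        (1 + 8 * β + 6 * β ^ 2) * p ^ 3) := by
    simp only [sum_range_succ, sum_range_zero, Nat.choose, driftMoment_zero hβ hβ1 hp haβ,
      driftMoment_one hβ hβ1 hp haβ, driftMoment_two hβ hβ1 hp haβ,
      driftMoment_three hβ hβ1 hp haβ]
    grind
  rw [← hvalue]
  exact hasSum_succ_pow_mul_driftPoisson hβ hβ1 haβ 3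

lemma succ_mul_jainL_succ {n k : ℕ} {x : ℝ} (h : n * x + (k + 1) * β ≠ 0) :
    (k + 1) * jainL n β x (k + 1) = n * x * driftPoisson β k (n * x + β) := by
  have hmean : n * x + β + k * β = n * x + (k + 1) * β := by ring
  rw [jainL, driftPoisson, hmean, Nat.factorial_succ]
  push_cast
  rw [pow_succ, mul_div_cancel_right₀ _ h]
  field_simp

theorem jain_fourth_moment (n : ℕ) (hn : 1 ≤ n) (x β : ℝ)
    (hx : 0 < x) (hβ0 : 0 ≤ β) (hβ1 : β < 1)
    (y p : ℝ) (hy : y = n * x) (hp : p = 1 / (1 - β)) :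
    HasSum (fun k : ℕ => (k / n : ℝ) ^ 4 * jainL n β x k)
      (y * p ^ 4 / (n : ℝ) ^ 4 *
        (y ^ 3 + 6 * y ^ 2 * p + (7 + 8 * β) * y * p ^ 2 +
          (1 + 8 * β + 6 * β ^ 2) * p ^ 3)) := by
  have hy0 : 0 < y := by rw [hy]; positivity
  have hp' : p * (1 - β) = 1 := by rw [hp, one_div_mul_cancel (by linarith)]
  have hterm (k : ℕ) : (((k + 1 : ℕ) : ℝ) / n) ^ 4 * jainL n β x (k + 1) =
      y / n ^ 4 * ((k + 1) ^ 3 * driftPoisson β k (y + β)) := by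
    have hjain : (k + 1) * jainL n β x (k + 1) = y * driftPoisson β k (y + β) := by
      subst hy
      exact succ_mul_jainL_succ (by positivity)
    push_cast
    linear_combination (k + 1 : ℝ) ^ 3 / n ^ 4 * hjain
  have hsum := (hasSum_succ_cube_mul_driftPoisson hβ0 hβ1 hp' hy0.le).mul_left (y / n ^ 4)
  rw [← mul_assoc, div_mul_eq_mul_div] at hsum
  refine (hasSum_nat_add_iff' 1).1 ?_
  simp only [range_one, sum_singleton, Nat.cast_zero, zero_div, ne_eq, OfNat.ofNat_ne_zero,
    not_false_eq_true, zero_pow, zero_mul, sub_zero]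
  exact hsum.congr_fun hterm
end

section
/- For n ≥ 1, x > 0, and 0 ≤ β < 1, setting y = nx and p = 1/(1-β), the fifth Jain moment satisfies ∑_{k=0}^∞ (k/n)⁵·L_{n,k}^{(β)}(x) = (y·p⁵/n⁵)·(y⁴ + 10y³p + 5(5+4β)y²p² + 15(1+4β+2β²)yp³ + (1 + 22β + 58β² + 24β³)p⁴). -/
/-!
Write `w b y k` for the Abel polynomial `y (y + k b) ^ (k - 1)` times `exp (-(y + k b)) / k!`, so
that the Jain basis function is `w β (n x) k`.

*Normalization.* Since `(exp y * w b y (k + 1))' = exp y * w b (y + b) k`, the tail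
`1 - ∑ k ≤ K, w b y k` is controlled by the tail for `K - 1` at `y + b`. By induction it lies
between `0` and the Chernoff bound `exp ((t - 1) y) / s ^ K`, `s = t exp (b (1 - t))`, and `s > 1`
for `t = 2 - b`. Hence `∑ w b y k = 1` for all `0 ≤ b < 1`, `0 ≤ y`.

*Moments.* Scaling both parameters by `t` is the same as tilting:
`w b y k * s ^ k = exp ((t - 1) y) * w (t b) (t y) k`. Summing this against `k ^ m` and
differentiating at `t = 1`, where `s` has derivative `1 - b`, yields the `(m + 1)`-st moment from
the `m`-th. The dilation `(b, y) ↦ (t b, t y)` acts on `y` and `p = 1 / (1 - b)` as the polynomial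
vector field `y ∂_y + (p ^ 2 - p) ∂_p`, so every moment is a polynomial in `y` and `p`.
-/

open Filter Finset MvPolynomial Topology

section PowerSeries

variable {𝕜 : Type*} [RCLike 𝕜]

lemma summable_norm_mul_deriv_pow_of_norm_lt {a : ℕ → 𝕜} {w z : 𝕜}
    (h : Summable fun k ↦ a k * w ^ k) (hz : ‖z‖ < ‖w‖) :
    Summable fun k : ℕ ↦ ‖a k * (k * z ^ (k - 1))‖ := by
  have hw : 0 < ‖w‖ := (norm_nonneg z).trans_lt hz
  obtain ⟨C, hC⟩ := h.tendsto_atTop_zero.norm.bddAbove_range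
  have hq : ‖‖z‖ / ‖w‖‖ < 1 := by
    rw [Real.norm_of_nonneg (by positivity)]
    exact (div_lt_one hw).2 hz
  have hgeom : Summable fun k : ℕ ↦ ((k + 1 : ℕ) : ℝ) * (‖z‖ / ‖w‖) ^ k := by
    simpa [add_mul] using (summable_pow_mul_geometric_of_norm_lt_one 1 hq).add
      (summable_geometric_of_norm_lt_one hq)
  rw [← summable_nat_add_iff 1]
  refine (hgeom.mul_left (C / ‖w‖)).of_nonneg_of_le (fun _ ↦ norm_nonneg _) fun k ↦ ?_
  calc ‖a (k + 1) * ((k + 1 : ℕ) * z ^ k)‖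
      = ‖a (k + 1) * w ^ (k + 1)‖ / ‖w‖ * ((k + 1 : ℕ) * (‖z‖ / ‖w‖) ^ k) := by
        simp only [norm_mul, norm_pow, RCLike.norm_natCast, div_pow, pow_succ]
        field_simp
    _ ≤ C / ‖w‖ * ((k + 1 : ℕ) * (‖z‖ / ‖w‖) ^ k) := by
        gcongr
        exact hC ⟨k + 1, rfl⟩

lemma hasDerivAt_tsum_mul_pow_of_norm_lt {a : ℕ → 𝕜} {w z : 𝕜}
    (h : Summable fun k ↦ a k * w ^ k) (hz : ‖z‖ < ‖w‖) :
    HasDerivAt (fun z ↦ ∑' k, a k * z ^ k) (∑' k : ℕ, a k * (k * z ^ (k - 1))) z := by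
  obtain ⟨ρ, hzρ, hρw⟩ := exists_between hz
  have hρ : 0 < ρ := (norm_nonneg z).trans_lt hzρ
  have hρ_norm : ‖(ρ : 𝕜)‖ = ρ := RCLike.norm_of_nonneg hρ.le
  refine hasDerivAt_tsum_of_isPreconnected
    (summable_norm_mul_deriv_pow_of_norm_lt h (z := (ρ : 𝕜)) (by rwa [hρ_norm]))
    Metric.isOpen_ball (convex_ball 0 ρ).isPreconnected
    (fun k x _ ↦ (hasDerivAt_pow k x).const_mul (a k)) (fun k x hx ↦ ?_)
    (Metric.mem_ball_self hρ) ?_ (by simpa using hzρ)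
  · simp only [norm_mul, norm_pow, hρ_norm]
    gcongr
    simpa using (mem_ball_zero_iff.1 hx).le
  · exact summable_of_ne_finset_zero (s := {0}) fun k hk ↦ by simp [notMem_singleton.1 hk]

end PowerSeries

lemma hasDerivAt_eval_mkDerivation {𝕜 σ : Type*} [NontriviallyNormedField 𝕜]
    {c : σ → 𝕜 → 𝕜} {v : σ → MvPolynomial σ 𝕜} {t : 𝕜}
    (hc : ∀ i, HasDerivAt (c i) (eval (fun j ↦ c j t) (v i)) t) (f : MvPolynomial σ 𝕜) :
    HasDerivAt (fun u ↦ eval (fun j ↦ c j u) f)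
      (eval (fun j ↦ c j t) (mkDerivation 𝕜 v f)) t := by
  induction f using MvPolynomial.induction_on with
  | C a => simpa using hasDerivAt_const t a
  | add f g hf hg => simpa using hf.fun_add hg
  | mul_X f i hf => simpa [mkDerivation_X, add_comm, mul_comm] using hf.fun_mul (hc i)

lemma le_of_hasDerivAt_le {f f' g g' : ℝ → ℝ} {a x : ℝ} (hf : ∀ u, HasDerivAt f (f' u) u)
    (hg : ∀ u, HasDerivAt g (g' u) u) (ha : f a ≤ g a) (h : ∀ u, a ≤ u → f' u ≤ g' u)
    (hx : a ≤ x) : f x ≤ g x :=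
  image_le_of_deriv_right_le_deriv_boundary
    (fun u _ ↦ (hf u).continuousAt.continuousWithinAt) (fun u _ ↦ (hf u).hasDerivWithinAt) ha
    (fun u _ ↦ (hg u).continuousAt.continuousWithinAt) (fun u _ ↦ (hg u).hasDerivWithinAt)
    (fun u hu ↦ h u hu.1) (Set.right_mem_Icc.2 hx)

/-- The value at `y` of the `k`-th Abel polynomial `y (y + k b) ^ (k - 1)`. For `k = 0` it is the
constant `1`, so that `y = 0` and `y + k b = 0` are not exceptional. -/
def abelPoly (b y : ℝ) : ℕ → ℝ
  | 0 => 1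
  | k + 1 => y * (y + (k + 1) * b) ^ k

/-- The weights of the generalized Poisson distribution on `ℕ` with parameters `y` and `b`, of which
the Jain basis functions are the case `y = n x`. -/
noncomputable def jainWeight (b y : ℝ) (k : ℕ) : ℝ :=
  abelPoly b y k / k.factorial * Real.exp (-(y + k * b))

/-- The factor `t exp (b (1 - t))` whose `k`-th power relates the weights with parameters `b, y` to
those with parameters `t b, t y`. -/
noncomputable def jainTilt (b t : ℝ) : ℝ := t * Real.exp (b * (1 - t))

variable {b y t : ℝ}

lemma abelPoly_nonneg (hb : 0 ≤ b) (hy : 0 ≤ y) (k : ℕ) : 0 ≤ abelPoly b y k := by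
  cases k <;> simp only [abelPoly] <;> positivity

lemma abelPoly_mul_mul (b y t : ℝ) (k : ℕ) :
    abelPoly (t * b) (t * y) k = t ^ k * abelPoly b y k := by
  cases k with
  | zero => simp [abelPoly]
  | succ k =>
    simp only [abelPoly]
    rw [show t * y + (k + 1) * (t * b) = t * (y + (k + 1) * b) by ring, mul_pow]
    ring

lemma hasDerivAt_abelPoly_succ (b y : ℝ) (k : ℕ) :
    HasDerivAt (fun u ↦ abelPoly b u (k + 1)) ((k + 1) * abelPoly b (y + b) k) y := by
  have h : HasDerivAt (fun u ↦ u * (u + (k + 1) * b) ^ k)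
      (1 * (y + (k + 1) * b) ^ k + y * (k * (y + (k + 1) * b) ^ (k - 1) * 1)) y :=
    (hasDerivAt_id y).fun_mul (((hasDerivAt_id y).add_const _).fun_pow k)
  refine h.congr_deriv ?_
  cases k with
  | zero => simp [abelPoly]
  | succ k =>
    simp only [abelPoly, Nat.add_sub_cancel]
    push_cast
    ring

lemma jainWeight_nonneg (hb : 0 ≤ b) (hy : 0 ≤ y) (k : ℕ) : 0 ≤ jainWeight b y k :=
  mul_nonneg (div_nonneg (abelPoly_nonneg hb hy k) (by positivity)) (Real.exp_pos _).le

lemma jainWeight_apply_zero (b y : ℝ) : jainWeight b y 0 = Real.exp (-y) := by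
  simp [jainWeight, abelPoly]

lemma jainWeight_mul_jainTilt_pow (b y t : ℝ) (k : ℕ) :
    jainWeight b y k * jainTilt b t ^ k =
      Real.exp ((t - 1) * y) * jainWeight (t * b) (t * y) k := by
  have hexp : Real.exp (-(y + k * b)) * Real.exp (k * (b * (1 - t))) =
      Real.exp ((t - 1) * y) * Real.exp (-(t * y + k * (t * b))) := by
    rw [← Real.exp_add, ← Real.exp_add]
    ring_nf
  rw [jainWeight, jainWeight, jainTilt, abelPoly_mul_mul, mul_pow, ← Real.exp_nat_mul]
  linear_combination (abelPoly b y k / k.factorial * t ^ k) * hexp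

lemma one_lt_jainTilt (hb1 : b < 1) : 1 < jainTilt b (2 - b) := by
  have hcube : 0 < (1 - b) ^ 3 := pow_pos (sub_pos.2 hb1) 3
  calc 1 < (2 - b) * (b * (1 - (2 - b)) + 1) := by linarith
    _ ≤ jainTilt b (2 - b) :=
      mul_le_mul_of_nonneg_left (Real.add_one_le_exp _) (by linarith)

lemma hasDerivAt_jainTilt_one (b : ℝ) : HasDerivAt (jainTilt b) (1 - b) 1 := by
  have h : HasDerivAt (fun t ↦ t * Real.exp (b * (1 - t)))
      (1 * Real.exp (b * (1 - 1)) + 1 * (Real.exp (b * (1 - 1)) * (b * -1))) 1 :=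
    (hasDerivAt_id _).fun_mul (((hasDerivAt_id _).const_sub 1).const_mul b).exp
  refine h.congr_deriv ?_
  simp [sub_eq_add_neg]

lemma hasDerivAt_exp_mul_jainWeight_succ (b y : ℝ) (k : ℕ) :
    HasDerivAt (fun u ↦ Real.exp u * jainWeight b u (k + 1))
      (Real.exp y * jainWeight b (y + b) k) y := by
  have hexp (u : ℝ) : Real.exp u * Real.exp (-(u + (k + 1 : ℕ) * b)) =
      Real.exp (-((k + 1 : ℕ) * b)) := by
    rw [← Real.exp_add]
    ring_nf
  have hshift : y + b + k * b = y + (k + 1 : ℕ) * b := by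
    push_cast
    ring
  have hcancel (u : ℝ) : Real.exp u * jainWeight b u (k + 1) =
      abelPoly b u (k + 1) * (Real.exp (-((k + 1 : ℕ) * b)) / (k + 1).factorial) := by
    rw [jainWeight, ← hexp u]
    ring
  simp only [hcancel]
  refine ((hasDerivAt_abelPoly_succ b y k).mul_const _).congr_deriv ?_
  rw [jainWeight, hshift, ← hexp y, Nat.factorial_succ]
  push_cast
  field_simp

lemma hasDerivAt_exp_mul_sum_jainWeight (b y : ℝ) (K : ℕ) :
    HasDerivAt (fun u ↦ Real.exp u * ∑ k ∈ range (K + 1), jainWeight b u k)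
      (Real.exp y * ∑ k ∈ range K, jainWeight b (y + b) k) y := by
  have hsplit (u : ℝ) : Real.exp u * ∑ k ∈ range (K + 1), jainWeight b u k =
      ∑ k ∈ range K, Real.exp u * jainWeight b u (k + 1) + 1 := by
    rw [sum_range_succ', mul_add, mul_sum, jainWeight_apply_zero, ← Real.exp_add, add_neg_cancel,
      Real.exp_zero]
  simp only [hsplit, mul_sum]
  exact (HasDerivAt.fun_sum fun k _ ↦ hasDerivAt_exp_mul_jainWeight_succ b y k).add_const 1

lemma sum_range_succ_jainWeight_zero (b : ℝ) (K : ℕ) :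
    ∑ k ∈ range (K + 1), jainWeight b 0 k = 1 := by
  simp [sum_range_succ', jainWeight, abelPoly]

lemma sum_jainWeight_le_one (hb : 0 ≤ b) (K : ℕ) (hy : 0 ≤ y) :
    ∑ k ∈ range K, jainWeight b y k ≤ 1 := by
  induction K generalizing y with
  | zero => simp
  | succ K ih =>
    have hcompare : Real.exp y * ∑ k ∈ range (K + 1), jainWeight b y k ≤ Real.exp y := by
      refine le_of_hasDerivAt_le (hasDerivAt_exp_mul_sum_jainWeight b · K) Real.hasDerivAt_exp ?_
        (fun u hu ↦ ?_) hy
      · simp [sum_range_succ_jainWeight_zero]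
      · exact mul_le_of_le_one_right (Real.exp_pos u).le (ih (by positivity))
    exact (mul_le_iff_le_one_right (Real.exp_pos y)).1 hcompare

lemma one_sub_sum_jainWeight_le (hb : 0 ≤ b) (ht : 1 ≤ t) (K : ℕ) (hy : 0 ≤ y) :
    1 - ∑ k ∈ range (K + 1), jainWeight b y k ≤ Real.exp ((t - 1) * y) / jainTilt b t ^ K := by
  have hs : 0 < jainTilt b t := mul_pos (by linarith) (Real.exp_pos _)
  induction K generalizing y with
  | zero =>
    have hone : 1 ≤ Real.exp ((t - 1) * y) :=
      Real.one_le_exp (mul_nonneg (sub_nonneg.2 ht) hy)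
    simpa [jainWeight_apply_zero] using hone.trans (by linarith [Real.exp_pos (-y)])
  | succ K ih =>
    have hexp (u : ℝ) : Real.exp (t * u) = Real.exp u * Real.exp ((t - 1) * u) := by
      rw [← Real.exp_add]
      ring_nf
    have hshift (u : ℝ) : Real.exp (t * u) * t / jainTilt b t ^ (K + 1) =
        Real.exp u * (Real.exp ((t - 1) * (u + b)) / jainTilt b t ^ K) := by
      have htilt : Real.exp ((t - 1) * (u + b)) * jainTilt b t = Real.exp ((t - 1) * u) * t := by
        rw [jainTilt, mul_left_comm, ← Real.exp_add, mul_comm]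
        ring_nf
      rw [hexp, pow_succ]
      field_simp
      linear_combination -htilt
    have hcompare : Real.exp y - Real.exp y * ∑ k ∈ range (K + 2), jainWeight b y k ≤
        Real.exp (t * y) / jainTilt b t ^ (K + 1) := by
      refine le_of_hasDerivAt_le
        (fun u ↦ (Real.hasDerivAt_exp u).fun_sub (hasDerivAt_exp_mul_sum_jainWeight b u (K + 1)))
        (fun u ↦ (((hasDerivAt_id u).const_mul t).exp).div_const _) ?_ (fun u hu ↦ ?_) hy
      · simpa [sum_range_succ_jainWeight_zero] using (pow_pos hs (K + 1)).le
      · rw [mul_one, id, hshift, ← mul_one_sub]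
        exact mul_le_mul_of_nonneg_left (ih (by positivity)) (Real.exp_pos u).le
    rw [← mul_one_sub, hexp, mul_div_assoc] at hcompare
    exact le_of_mul_le_mul_left hcompare (Real.exp_pos y)

theorem hasSum_jainWeight (hb : 0 ≤ b) (hb1 : b < 1) (hy : 0 ≤ y) :
    HasSum (jainWeight b y) 1 := by
  rw [hasSum_iff_tendsto_nat_of_nonneg (jainWeight_nonneg hb hy), ← tendsto_add_atTop_iff_nat 1]
  have htail : Tendsto (fun K ↦ Real.exp ((2 - b - 1) * y) / jainTilt b (2 - b) ^ K) atTop (𝓝 0) :=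
    (tendsto_pow_atTop_atTop_of_one_lt (one_lt_jainTilt hb1)).const_div_atTop _
  refine tendsto_of_tendsto_of_tendsto_of_le_of_le (by simpa using htail.const_sub 1)
    tendsto_const_nhds (fun K ↦ ?_) (fun K ↦ sum_jainWeight_le_one hb (K + 1) hy)
  exact sub_le_comm.1 (one_sub_sum_jainWeight_le hb (by linarith) K hy)

lemma hasSum_mul_jainWeight_mul_jainTilt_pow {c : ℕ → ℝ} {S : ℝ}
    (h : HasSum (fun k ↦ c k * jainWeight (t * b) (t * y) k) S) :
    HasSum (fun k ↦ c k * jainWeight b y k * jainTilt b t ^ k) (Real.exp ((t - 1) * y) * S) := by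
  convert! h.mul_left (Real.exp ((t - 1) * y)) using 2 with k
  rw [mul_assoc, jainWeight_mul_jainTilt_pow, mul_left_comm]

theorem hasSum_natCast_mul_jainWeight {c : ℕ → ℝ} {S : ℝ → ℝ} {S' : ℝ} (hb1 : b < 1)
    (h : ∀ t, 0 < t → t * b < 1 → HasSum (fun k ↦ c k * jainWeight (t * b) (t * y) k) (S t))
    (hS : HasDerivAt S S' 1) :
    HasSum (fun k : ℕ ↦ k * (c k * jainWeight b y k)) ((y * S 1 + S') / (1 - b)) := by
  have hsummable : Summable fun k ↦ c k * jainWeight b y k * jainTilt b (2 - b) ^ k :=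
    (hasSum_mul_jainWeight_mul_jainTilt_pow (h (2 - b) (by linarith)
      (by nlinarith [pow_pos (sub_pos.2 hb1) 2]))).summable
  have hnorm : ‖(1 : ℝ)‖ < ‖jainTilt b (2 - b)‖ := by
    simpa using (one_lt_jainTilt hb1).trans_le (le_abs_self _)
  have hone : jainTilt b 1 = 1 := by simp [jainTilt]
  have hderiv_series := (hasDerivAt_tsum_mul_pow_of_norm_lt hsummable hnorm).comp_of_eq 1
    (hasDerivAt_jainTilt_one b) hone.symm
  have hderiv_closed : HasDerivAt (fun t ↦ Real.exp ((t - 1) * y) * S t) (y * S 1 + S') 1 := by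
    simpa using ((((hasDerivAt_id (1 : ℝ)).sub_const 1).mul_const y).exp).fun_mul hS
  have heq : (fun t ↦ Real.exp ((t - 1) * y) * S t) =ᶠ[𝓝 1]
      fun t ↦ ∑' k, c k * jainWeight b y k * jainTilt b t ^ k := by
    have hnear : ∀ᶠ t : ℝ in 𝓝 1, t * b < 1 :=
      (continuous_mul_const b).continuousAt.eventually_lt_const (by simpa using hb1)
    filter_upwards [lt_mem_nhds one_pos, hnear] with t ht htb
    exact (hasSum_mul_jainWeight_mul_jainTilt_pow (h t ht htb)).tsum_eq.symm
  have hvalue := hderiv_closed.unique (hderiv_series.congr_of_eventuallyEq heq)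
  have hb : 1 - b ≠ 0 := (sub_pos.2 hb1).ne'
  rw [hvalue, mul_div_cancel_right₀ _ hb]
  convert! (summable_norm_mul_deriv_pow_of_norm_lt hsummable hnorm).of_norm.hasSum using 2 with k
  simp [mul_comm]

/-- The vector field generating the dilations `(b, y) ↦ (t b, t y)`, that is, their velocity at
`t = 1`, in the coordinates `X 0 = y` and `X 1 = p = 1 / (1 - b)`. -/
noncomputable def dilationField : Fin 2 → MvPolynomial (Fin 2) ℝ := ![X 0, X 1 ^ 2 - X 1]

/-- The moments of `jainWeight` as polynomials in `X 0 = y` and `X 1 = p = 1 / (1 - b)`. -/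
noncomputable def jainMoment : ℕ → MvPolynomial (Fin 2) ℝ
  | 0 => 1
  | m + 1 => X 1 * (X 0 * jainMoment m + mkDerivation ℝ dilationField (jainMoment m))

lemma hasDerivAt_eval_dilation (hb1 : b ≠ 1) (y : ℝ) (f : MvPolynomial (Fin 2) ℝ) :
    HasDerivAt (fun t ↦ eval ![t * y, (1 - t * b)⁻¹] f)
      (eval ![y, (1 - b)⁻¹] (mkDerivation ℝ dilationField f)) 1 := by
  have hb : 1 - b ≠ 0 := sub_ne_zero.2 hb1.symm
  have hX0 : HasDerivAt (fun t ↦ t * y) y 1 := by simpa using (hasDerivAt_id (1 : ℝ)).mul_const y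
  have hX1 : HasDerivAt (fun t ↦ (1 - t * b)⁻¹) (((1 - b) ^ 2)⁻¹ - (1 - b)⁻¹) 1 := by
    refine ((((hasDerivAt_id (1 : ℝ)).mul_const b).const_sub 1).fun_inv (by simpa)).congr_deriv ?_
    simp only [id, one_mul]
    field_simp
    ring
  have hcurve : ∀ i, HasDerivAt (fun t ↦ ![t * y, (1 - t * b)⁻¹] i)
      (eval ![y, (1 - b)⁻¹] (dilationField i)) 1 := by
    simpa [Fin.forall_fin_two, dilationField] using And.intro hX0 hX1
  have heval := hasDerivAt_eval_mkDerivation (c := fun i t ↦ ![t * y, (1 - t * b)⁻¹] i)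
    (v := dilationField) (t := 1) (by simpa only [one_mul] using hcurve) f
  simpa only [one_mul] using heval

theorem hasSum_pow_mul_jainWeight (hb : 0 ≤ b) (hb1 : b < 1) (hy : 0 ≤ y) (m : ℕ) :
    HasSum (fun k : ℕ ↦ (k : ℝ) ^ m * jainWeight b y k)
      (eval ![y, (1 - b)⁻¹] (jainMoment m)) := by
  induction m generalizing b y with
  | zero => simpa [jainMoment] using hasSum_jainWeight hb hb1 hy
  | succ m ih =>
    have hstep := hasSum_natCast_mul_jainWeight hb1
      (fun t ht htb ↦ ih (b := t * b) (y := t * y) (by positivity) htb (by positivity))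
      (hasDerivAt_eval_dilation hb1.ne y (jainMoment m))
    convert! hstep using 2
    · ring
    · simp only [jainMoment, map_mul, map_add, eval_X, Matrix.cons_val_zero, Matrix.cons_val_one,
        one_mul]
      ring

lemma jainMoment_five : jainMoment 5 =
    X 0 * X 1 ^ 5 * (X 0 ^ 4 + 10 * X 0 ^ 3 * X 1 + 5 * X 0 ^ 2 * X 1 * (9 * X 1 - 4) +
      15 * X 0 * X 1 * (7 * X 1 ^ 2 - 8 * X 1 + 2) +
      X 1 * (105 * X 1 ^ 3 - 210 * X 1 ^ 2 + 130 * X 1 - 24)) := by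
  have hX0 : mkDerivation ℝ dilationField (X 0) = X 0 := by simp [dilationField, mkDerivation_X]
  have hX1 : mkDerivation ℝ dilationField (X 1) = X 1 ^ 2 - X 1 := by
    simp [dilationField, mkDerivation_X]
  have htwo : mkDerivation ℝ dilationField 2 = 0 := by
    exact_mod_cast (mkDerivation ℝ dilationField).map_natCast 2
  simp only [jainMoment, hX0, hX1, htwo, Derivation.map_one_eq_zero, Derivation.leibniz,
    Derivation.leibniz_pow, map_add, map_sub, smul_eq_mul, nsmul_eq_mul, Nat.cast_ofNat,
    Nat.add_one_sub_one, pow_one, mul_one, mul_zero, add_zero]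
  ring

lemma eval_jainMoment_five (y : ℝ) {p β : ℝ} (h : p * (1 - β) = 1) :
    eval ![y, p] (jainMoment 5) = y * p ^ 5 * (y ^ 4 + 10 * y ^ 3 * p +
      5 * (5 + 4 * β) * y ^ 2 * p ^ 2 + 15 * (1 + 4 * β + 2 * β ^ 2) * y * p ^ 3 +
      (1 + 22 * β + 58 * β ^ 2 + 24 * β ^ 3) * p ^ 4) := by
  have hp : p ≠ 0 := left_ne_zero_of_mul_eq_one h
  have hβ : β = (p - 1) / p := by
    rw [eq_div_iff hp]
    linear_combination -h
  rw [jainMoment_five, hβ]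
  simp only [map_mul, map_add, map_sub, map_pow, map_ofNat, eval_X, Matrix.cons_val_zero,
    Matrix.cons_val_one]
  field_simp
  ring

lemma jainL_eq_jainWeight {n : ℕ} {β x : ℝ} (hβ : 0 ≤ β) (h : 0 < n * x) (k : ℕ) :
    jainL n β x k = jainWeight β (n * x) k := by
  have hne : n * x + k * β ≠ 0 := by positivity
  cases k with
  | zero => simp [jainL, jainWeight, abelPoly, -mul_inv_rev, mul_inv_cancel₀ h.ne']
  | succ k =>
    rw [jainL, jainWeight, abelPoly, pow_succ, mul_div_cancel_right₀ _ hne]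
    push_cast
    rfl

theorem jain_fifth_moment (n : ℕ) (hn : 1 ≤ n) (x β : ℝ)
    (hx : 0 < x) (hβ0 : 0 ≤ β) (hβ1 : β < 1)
    (y p : ℝ) (hy : y = n * x) (hp : p = 1 / (1 - β)) :
    HasSum (fun k : ℕ => (k / n : ℝ) ^ 5 * jainL n β x k)
      (y * p ^ 5 / (n : ℝ) ^ 5 *
        (y ^ 4 + 10 * y ^ 3 * p + 5 * (5 + 4 * β) * y ^ 2 * p ^ 2 +
          15 * (1 + 4 * β + 2 * β ^ 2) * y * p ^ 3 +
          (1 + 22 * β + 58 * β ^ 2 + 24 * β ^ 3) * p ^ 4)) := by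
  have hn0 : (0 : ℝ) < n := by exact_mod_cast hn
  have hy0 : 0 < n * x := mul_pos hn0 hx
  have hpβ : (1 - β)⁻¹ * (1 - β) = 1 := inv_mul_cancel₀ (sub_pos.2 hβ1).ne'
  have hmoment := (hasSum_pow_mul_jainWeight hβ0 hβ1 hy0.le 5).div_const ((n : ℝ) ^ 5)
  rw [eval_jainMoment_five _ hpβ] at hmoment
  rw [hy, hp, one_div, div_mul_eq_mul_div]
  refine hmoment.congr_fun fun k ↦ ?_
  rw [jainL_eq_jainWeight hβ0 hy0, div_pow, div_mul_eq_mul_div]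
end
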